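/- arXiv:0712.2125 — 12 statements merged into one kernel-verified Lean document; each statement's English description precedes it below -/
import Mathlib

section
/- For all nonnegative integers m and n and every complex number x, one has 1 = (1-x)^{n+1} · Σ_{k=0}^{m} C(n+k, k) x^k + x^{m+1} · Σ_{k=0}^{n} C(m+k, k) (1-x)^k (the Chaundy–Bullard identity). -/
/-!
The proof is by induction on `n`. Writing `S n m = ∑_{k ≤ m} C(n+k, k) x^k`, Pascal's rule gives
`(1 - x) S (n+1) m = S n m - C(n+1+m, m) x^(m+1)`. Passing from `n` to `n + 1` therefore removes
`C(n+1+m, m) x^(m+1) (1-x)^(n+1)` from the first summand and adds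
`C(m+n+1, n+1) x^(m+1) (1-x)^(n+1)` to the second; these agree by symmetry of the binomial
coefficients. The case `n = 0` is the finite geometric series.
-/

/-- Pascal's rule, summed against powers of `x`. -/
lemma one_sub_mul_sum_choose (n m : ℕ) (x : ℂ) :
    (1 - x) * ∑ k ∈ Finset.range (m + 1), ((n + 1 + k).choose k : ℂ) * x ^ k
      = ∑ k ∈ Finset.range (m + 1), ((n + k).choose k : ℂ) * x ^ k
        - ((n + 1 + m).choose m : ℂ) * x ^ (m + 1) := by
  induction m with
  | zero => simp
  | succ m ih =>
    rw [Finset.sum_range_succ, mul_add, ih, Finset.sum_range_succ _ (m + 1)]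
    have h : ((n + 1 + (m + 1)).choose (m + 1) : ℂ)
        = (n + 1 + m).choose m + (n + (m + 1)).choose (m + 1) := by
      rw [show n + (m + 1) = n + 1 + m by ring, ← add_assoc (n + 1) m 1, Nat.choose_succ_succ]
      push_cast
      rfl
    rw [h]
    ring

/-- The Chaundy–Bullard identity. -/
theorem chaundy_bullard (m n : ℕ) (x : ℂ) :
    (1 : ℂ) =
      (1 - x) ^ (n + 1) * ∑ k ∈ Finset.range (m + 1), ((n + k).choose k : ℂ) * x ^ k
      + x ^ (m + 1) * ∑ k ∈ Finset.range (n + 1), ((m + k).choose k : ℂ) * (1 - x) ^ k := by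
  induction n with
  | zero =>
    have h := mul_neg_geom_sum x (m + 1)
    simp [h]
  | succ n ih =>
    have hsymm : ((m + (n + 1)).choose (n + 1) : ℂ) = (n + 1 + m).choose m := by
      rw [add_comm m (n + 1), Nat.choose_symm_add]
    rw [pow_succ (1 - x) (n + 1), mul_assoc, one_sub_mul_sum_choose,
      Finset.sum_range_succ _ (n + 1), hsymm]
    linear_combination ih
end

section
/- For all nonnegative integers m and n and all complex numbers x, y, one has (x+y)^{m+n+1} = y^{n+1} · Σ_{k=0}^{m} C(n+k, k) x^k (x+y)^{m-k} + x^{m+1} · Σ_{k=0}^{n} C(m+k, k) y^k (x+y)^{n-k} (the homogeneous form of the Chaundy–Bullard identity). -/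
/-!
Put `s = x + y` and `S(m, n; t) = ∑_{k ≤ n} C(m+k, k) t^k s^(n-k)`, so that the right-hand side is
`F(m, n) = y^(n+1) S(n, m; x) + x^(m+1) S(m, n; y)`. Splitting off the last term gives
`S(m, n+1; t) = s S(m, n; t) + C(m+n+1, n+1) t^(n+1)` (`cbSum_succ`), and Pascal's rule gives
`s S(m, n; y) = x S(m+1, n; y) + C(m+n+1, n) y^(n+1)` (`add_mul_cbSum`). Together these yield
`F(m+1, n) = s F(m, n)`, the two binomial terms cancelling by symmetry of binomial coefficients.
The case `m = 0` is the factorization of `s^(n+1) - y^(n+1)` as a multiple of `s - y = x`.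
-/

/-- The truncated sum `∑_{k ≤ n} C(m+k, k) t^k s^(n-k)`. -/
def cbSum (m n : ℕ) (t s : ℂ) : ℂ :=
  ∑ k ∈ Finset.range (n + 1), ((m + k).choose k : ℂ) * t ^ k * s ^ (n - k)

lemma cbSum_zero (m : ℕ) (t s : ℂ) : cbSum m 0 t s = 1 := by
  simp [cbSum]

lemma cbSum_succ (m n : ℕ) (t s : ℂ) :
    cbSum m (n + 1) t s =
      s * cbSum m n t s + ((m + (n + 1)).choose (n + 1) : ℂ) * t ^ (n + 1) := by
  unfold cbSum
  rw [Finset.sum_range_succ, Finset.mul_sum]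
  congr 1
  · refine Finset.sum_congr rfl fun k hk => ?_
    have hkn : k ≤ n := Nat.lt_succ_iff.mp (Finset.mem_range.mp hk)
    rw [Nat.succ_sub hkn, pow_succ]
    ring
  · simp

/-- Raising the upper parameter `m` of the sum trades a factor `x + y` for `x`, up to one
binomial term. -/
lemma add_mul_cbSum (m n : ℕ) (x y : ℂ) :
    (x + y) * cbSum m n y (x + y) =
      x * cbSum (m + 1) n y (x + y) + ((m + 1 + n).choose n : ℂ) * y ^ (n + 1) := by
  induction n with
  | zero => simp [cbSum_zero]
  | succ n ih =>
    have pascal : ((m + 1 + (n + 1)).choose (n + 1) : ℂ) =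
        ((m + 1 + n).choose n : ℂ) + ((m + (n + 1)).choose (n + 1) : ℂ) := by
      rw [show m + (n + 1) = m + 1 + n by ring, ← add_assoc, Nat.choose_succ_succ]
      push_cast
      rfl
    rw [cbSum_succ, cbSum_succ, pascal]
    linear_combination (x + y) * ih

lemma pow_succ_eq_cbSum_zero (n : ℕ) (x y : ℂ) :
    (x + y) ^ (n + 1) = y ^ (n + 1) + x * cbSum 0 n y (x + y) := by
  induction n with
  | zero => simp [cbSum_zero, add_comm]
  | succ n ih =>
    rw [cbSum_succ, Nat.zero_add, Nat.choose_self, Nat.cast_one]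
    linear_combination (x + y) * ih

/-- The homogeneous form of the Chaundy–Bullard identity. -/
theorem chaundy_bullard_homogeneous (m n : ℕ) (x y : ℂ) :
    (x + y) ^ (m + n + 1) =
      y ^ (n + 1) * ∑ k ∈ Finset.range (m + 1),
        ((n + k).choose k : ℂ) * x ^ k * (x + y) ^ (m - k)
      + x ^ (m + 1) * ∑ k ∈ Finset.range (n + 1),
        ((m + k).choose k : ℂ) * y ^ k * (x + y) ^ (n - k) := by
  change _ = y ^ (n + 1) * cbSum n m x (x + y) + x ^ (m + 1) * cbSum m n y (x + y)
  induction m with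
  | zero => simpa [cbSum_zero] using pow_succ_eq_cbSum_zero n x y
  | succ m ih =>
    have symm_choose : ((n + (m + 1)).choose (m + 1) : ℂ) = ((m + 1 + n).choose n : ℂ) := by
      rw [add_comm n (m + 1), Nat.choose_symm_add]
    rw [cbSum_succ, symm_choose]
    linear_combination (x + y) * ih + x ^ (m + 1) * add_mul_cbSum m n x y
end

section
/- For all nonnegative integers m and n and every complex number x, one has Σ_{k=0}^{m} C(m+n+1, k) x^k (1-x)^{m-k} = Σ_{k=0}^{m} C(n+k, k) x^k. -/
/-!
Fix `n` and let `L m` be the left-hand side. Pascal's rule applied to `C(m+n+2, k)` splits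
`L (m+1)` into `x * L m` (the terms `C(m+n+1, k-1)`) and `(1-x) * L m + C(m+n+1, m+1) x^(m+1)`
(the terms `C(m+n+1, k)`). Hence `L (m+1) = L m + C(n+m+1, m+1) x^(m+1)`, which is the recurrence
of the right-hand side, and the identity follows by induction on `m`.
-/

/-- One step of the recurrence, for an arbitrary upper index `N`. -/
lemma truncated_sum_succ (m N : ℕ) (x : ℂ) :
    ∑ k ∈ Finset.range (m + 2), ((N + 1).choose k : ℂ) * x ^ k * (1 - x) ^ (m + 1 - k)
      = ∑ k ∈ Finset.range (m + 1), (N.choose k : ℂ) * x ^ k * (1 - x) ^ (m - k)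
        + (N.choose (m + 1) : ℂ) * x ^ (m + 1) := by
  have hx : ∑ k ∈ Finset.range (m + 2), ((N + 1).choose k : ℂ) * x ^ k * (1 - x) ^ (m + 1 - k)
      = x * ∑ k ∈ Finset.range (m + 1), (N.choose k : ℂ) * x ^ k * (1 - x) ^ (m - k)
        + ∑ k ∈ Finset.range (m + 2), (N.choose k : ℂ) * x ^ k * (1 - x) ^ (m + 1 - k) := by
    rw [Finset.sum_range_succ', Finset.sum_range_succ' _ (m + 1), ← add_assoc, Finset.mul_sum,
      ← Finset.sum_add_distrib]
    congr 1
    · refine Finset.sum_congr rfl fun k _ => ?_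
      rw [Nat.choose_succ_succ, Nat.add_sub_add_right]
      push_cast
      ring
    · simp
  have hy : ∑ k ∈ Finset.range (m + 2), (N.choose k : ℂ) * x ^ k * (1 - x) ^ (m + 1 - k)
      = (1 - x) * ∑ k ∈ Finset.range (m + 1), (N.choose k : ℂ) * x ^ k * (1 - x) ^ (m - k)
        + (N.choose (m + 1) : ℂ) * x ^ (m + 1) := by
    rw [Finset.sum_range_succ, Finset.mul_sum]
    congr 1
    · refine Finset.sum_congr rfl fun k hk => ?_
      rw [Nat.succ_sub (Nat.lt_succ_iff.mp (Finset.mem_range.mp hk)), pow_succ]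
      ring
    · simp
  rw [hx, hy]
  ring

theorem truncated_binomial_identity (m n : ℕ) (x : ℂ) :
    ∑ k ∈ Finset.range (m + 1), ((m + n + 1).choose k : ℂ) * x ^ k * (1 - x) ^ (m - k)
      = ∑ k ∈ Finset.range (m + 1), ((n + k).choose k : ℂ) * x ^ k := by
  induction m with
  | zero => simp
  | succ m ih =>
    rw [show m + 1 + n + 1 = (m + n + 1) + 1 by ring, truncated_sum_succ, ih,
      Finset.sum_range_succ _ (m + 1), show n + (m + 1) = m + n + 1 by ring]
end

section
/- For all nonnegative integers m and n and every real number x ∈ (0,1), one has ((m+n+1)! / (m! · n!)) · ∫_0^x t^m (1-t)^n dt = x^{m+1} · Σ_{k=0}^{n} ((m+1)_k / k!) (1-x)^k. -/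
open Polynomial

/-!
The right-hand side vanishes at `x = 0`, so by the fundamental theorem of calculus it suffices that
its derivative is the integrand times the constant. This is `hasDerivAt_betaSum`, by induction on
`n`: with `c_k = (m+1)_k / k! = (m+k)! / (m! k!)`, the constant is `(m+n+1) c_n = (n+1) c_{n+1}`,
and the derivative of the new term `c_{n+1} t^{m+1} (1-t)^{n+1}` adds to the previous derivative
`(n+1) c_{n+1} t^m (1-t)^n` to give `(m+n+2) c_{n+1} t^m (1-t)^{n+1}`.
-/

lemma factorial_mul_ascPochhammer_eval (m k : ℕ) :
    (m.factorial : ℝ) * (ascPochhammer ℝ k).eval ((m : ℝ) + 1) = ((m + k).factorial : ℝ) := by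
  induction k with
  | zero => simp
  | succ k ih =>
    rw [ascPochhammer_succ_eval, ← mul_assoc, ih, ← add_assoc, Nat.factorial_succ]
    push_cast
    ring

lemma hasDerivAt_betaSum (m n : ℕ) (t : ℝ) :
    HasDerivAt (fun x : ℝ => x ^ (m + 1) * ∑ k ∈ Finset.range (n + 1),
        (ascPochhammer ℝ k).eval ((m : ℝ) + 1) / (k.factorial : ℝ) * (1 - x) ^ k)
      (((m + n + 1).factorial : ℝ) / ((m.factorial : ℝ) * (n.factorial : ℝ))
        * (t ^ m * (1 - t) ^ n)) t := by
  have hm : (m.factorial : ℝ) ≠ 0 := by exact_mod_cast m.factorial_ne_zero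
  have hc (k : ℕ) : (ascPochhammer ℝ k).eval ((m : ℝ) + 1)
      = ((m + k).factorial : ℝ) / m.factorial := by
    rw [← factorial_mul_ascPochhammer_eval, mul_div_cancel_left₀ _ hm]
  induction n with
  | zero =>
    have h := hasDerivAt_pow (m + 1) t
    refine (h.congr_deriv ?_).congr_of_eventuallyEq (Filter.Eventually.of_forall fun x => ?_)
    · simp only [add_zero, Nat.factorial_succ, Nat.factorial_zero, add_tsub_cancel_right]
      push_cast
      field_simp
    · simp
  | succ n ih =>
    have hn : (n.factorial : ℝ) ≠ 0 := by exact_mod_cast n.factorial_ne_zero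
    have hn1 : ((n : ℝ) + 1) ≠ 0 := by positivity
    have hterm := ((hasDerivAt_pow (m + 1) t).mul
      (((hasDerivAt_id t).const_sub 1).pow (n + 1))).const_mul
      ((ascPochhammer ℝ (n + 1)).eval ((m : ℝ) + 1) / ((n + 1).factorial : ℝ))
    refine ((ih.add hterm).congr_deriv ?_).congr_of_eventuallyEq
      (Filter.Eventually.of_forall fun x => ?_)
    · rw [hc, show m + (n + 1) + 1 = (m + n + 1) + 1 by ring, Nat.factorial_succ (m + n + 1),
        show m + (n + 1) = m + n + 1 by ring, Nat.factorial_succ n]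
      simp only [Pi.pow_apply, id, add_tsub_cancel_right]
      push_cast
      field_simp
      ring
    · simp only [Pi.add_apply, Pi.mul_apply, Pi.pow_apply, id]
      rw [Finset.sum_range_succ]
      ring

/-- The incomplete beta integral with nonnegative integer exponents. -/
theorem incomplete_beta_sum (m n : ℕ) (x : ℝ) (hx : x ∈ Set.Ioo (0:ℝ) 1) :
    ((m + n + 1).factorial : ℝ) / ((m.factorial : ℝ) * (n.factorial : ℝ))
        * ∫ t in (0:ℝ)..x, t ^ m * (1 - t) ^ n
      = x ^ (m + 1) * ∑ k ∈ Finset.range (n + 1),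
          (ascPochhammer ℝ k).eval ((m : ℝ) + 1) / (k.factorial : ℝ) * (1 - x) ^ k := by
  rw [← intervalIntegral.integral_const_mul,
    intervalIntegral.integral_eq_sub_of_hasDerivAt (fun t _ => hasDerivAt_betaSum m n t)
      (Continuous.intervalIntegrable (by fun_prop) _ _)]
  simp
end

section
/- For all nonnegative integers m and n and every complex number x, one has Σ_{k=0}^{n} ((m+1)_k / k!) (1-x)^k = ((m+n+1)! / ((m+1)! · n!)) · Σ_{k=0}^{n} ( (-n)_k (m+1)_k / ((m+2)_k · k!) ) x^k (a terminating limit case of Pfaff's identity). -/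
open Polynomial

/-!
After writing the Pochhammer symbols through factorials and binomial coefficients, the claim is
`∑ₖ (m+k)!/(m! k!) (1-x)^k = (m+n+1)!/(m! n!) ∑ₖ (-1)^k C(n,k)/(m+1+k) x^k`.
This is proved by induction on `n`. When `n` grows by one, the coefficient of `x^k` on the right
increases by `(m+n+1)!/(m! (n+1)!) (-1)^k C(n+1,k)`, because the factor `m+1+k` cancels
(`pfaffCoeff_succ`). By the binomial theorem these increments add up to
`(m+n+1)!/(m! (n+1)!) (1-x)^(n+1)`, which is the new term on the left.
-/

/-- The coefficient of `x^k` on the right-hand side, in terms of factorials and binomials. -/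
noncomputable def pfaffCoeff (m n k : ℕ) : ℂ :=
  ((m + n + 1).factorial : ℂ) / ((m.factorial : ℂ) * (n.factorial : ℂ))
    * ((-1) ^ k * (n.choose k : ℂ) / ((m : ℂ) + 1 + k))

lemma ascPochhammer_eval_natCast_add_one (m k : ℕ) :
    (ascPochhammer ℂ k).eval ((m : ℂ) + 1) = ((m + k).factorial : ℂ) / (m.factorial : ℂ) := by
  have hm : (m.factorial : ℂ) ≠ 0 := by exact_mod_cast m.factorial_ne_zero
  rw [eq_div_iff hm, ← Nat.factorial_mul_ascFactorial m k]
  have h := ascPochhammer_eval_cast (S := ℂ) k (m + 1)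
  rw [ascPochhammer_nat_eq_ascFactorial] at h
  push_cast at h ⊢
  rw [h, mul_comm]

lemma ascPochhammer_eval_neg_natCast (n k : ℕ) :
    (ascPochhammer ℂ k).eval (-(n : ℂ)) = (-1) ^ k * ((k.factorial : ℂ) * (n.choose k : ℂ)) := by
  rw [ascPochhammer_eval_neg_eq_descPochhammer, descPochhammer_eval_eq_descFactorial,
    Nat.descFactorial_eq_factorial_mul_choose]
  push_cast
  rfl

lemma pfaffCoeff_eq (m n k : ℕ) :
    ((m + n + 1).factorial : ℂ) / (((m + 1).factorial : ℂ) * (n.factorial : ℂ))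
      * ((ascPochhammer ℂ k).eval (-(n : ℂ)) * (ascPochhammer ℂ k).eval ((m : ℂ) + 1)
          / ((ascPochhammer ℂ k).eval ((m : ℂ) + 2) * (k.factorial : ℂ))) = pfaffCoeff m n k := by
  have h2 : (m : ℂ) + 2 = ((m + 1 : ℕ) : ℂ) + 1 := by push_cast; ring
  rw [h2, ascPochhammer_eval_natCast_add_one, ascPochhammer_eval_natCast_add_one,
    ascPochhammer_eval_neg_natCast, pfaffCoeff, show m + 1 + k = (m + k) + 1 by ring,
    Nat.factorial_succ (m + k), Nat.factorial_succ m]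
  have hm : (m.factorial : ℂ) ≠ 0 := by exact_mod_cast m.factorial_ne_zero
  have hn : (n.factorial : ℂ) ≠ 0 := by exact_mod_cast n.factorial_ne_zero
  have hk : (k.factorial : ℂ) ≠ 0 := by exact_mod_cast k.factorial_ne_zero
  have hmk : ((m + k).factorial : ℂ) ≠ 0 := by exact_mod_cast (m + k).factorial_ne_zero
  have h1 : (m : ℂ) + 1 ≠ 0 := by exact_mod_cast m.succ_ne_zero
  have h3 : (m : ℂ) + k + 1 ≠ 0 := by exact_mod_cast (m + k).succ_ne_zero
  have h4 : (m : ℂ) + 1 + k = m + k + 1 := by ring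
  rw [h4]
  push_cast
  field_simp

lemma pfaffCoeff_succ (m n k : ℕ) (hk : k ≤ n + 1) :
    pfaffCoeff m (n + 1) k = pfaffCoeff m n k
      + ((m + (n + 1)).factorial : ℂ) / ((m.factorial : ℂ) * ((n + 1).factorial : ℂ))
        * ((-1) ^ k * ((n + 1).choose k : ℂ)) := by
  have hc : (n.choose k : ℂ) = ((n + 1).choose k : ℂ) * ((n : ℂ) + 1 - k) / ((n : ℂ) + 1) := by
    have h := Nat.choose_mul_succ_eq n k
    have h1 : (n : ℂ) + 1 ≠ 0 := by exact_mod_cast n.succ_ne_zero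
    rw [eq_div_iff h1]
    have h' := congrArg (Nat.cast : ℕ → ℂ) h
    push_cast [Nat.cast_sub hk] at h'
    exact h'
  rw [pfaffCoeff, pfaffCoeff, hc, show m + (n + 1) + 1 = (m + n + 1) + 1 by ring,
    show m + (n + 1) = m + n + 1 by ring, Nat.factorial_succ (m + n + 1), Nat.factorial_succ n]
  have hm : (m.factorial : ℂ) ≠ 0 := by exact_mod_cast m.factorial_ne_zero
  have hn : (n.factorial : ℂ) ≠ 0 := by exact_mod_cast n.factorial_ne_zero
  have h1 : (n : ℂ) + 1 ≠ 0 := by exact_mod_cast n.succ_ne_zero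
  have h3 : (m : ℂ) + 1 + k ≠ 0 := by
    have : ((m + 1 + k : ℕ) : ℂ) ≠ 0 := by exact_mod_cast (by omega : m + 1 + k ≠ 0)
    exact_mod_cast this
  push_cast
  field_simp
  ring

lemma sum_pfaffCoeff (m n : ℕ) (x : ℂ) :
    ∑ k ∈ Finset.range (n + 1),
        ((m + k).factorial : ℂ) / ((m.factorial : ℂ) * (k.factorial : ℂ)) * (1 - x) ^ k
      = ∑ k ∈ Finset.range (n + 1), pfaffCoeff m n k * x ^ k := by
  induction n with
  | zero =>
    have hm : (m.factorial : ℂ) ≠ 0 := by exact_mod_cast m.factorial_ne_zero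
    have h1 : (m : ℂ) + 1 ≠ 0 := by exact_mod_cast m.succ_ne_zero
    simp [pfaffCoeff, Nat.factorial_succ]
    field_simp
  | succ n ih =>
    have hbin : (1 - x) ^ (n + 1)
        = ∑ k ∈ Finset.range (n + 1 + 1), (-1) ^ k * ((n + 1).choose k : ℂ) * x ^ k := by
      rw [show 1 - x = -x + 1 by ring, add_pow]
      refine Finset.sum_congr rfl fun k _ => ?_
      rw [neg_pow, one_pow]
      ring
    -- The sum for `n` may be extended by `k = n + 1`, where `n.choose (n + 1) = 0`.
    have hext : ∑ k ∈ Finset.range (n + 1), pfaffCoeff m n k * x ^ k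
        = ∑ k ∈ Finset.range (n + 1 + 1), pfaffCoeff m n k * x ^ k := by
      rw [Finset.sum_range_succ _ (n + 1)]
      simp [pfaffCoeff]
    rw [Finset.sum_range_succ, ih, hext, hbin, Finset.mul_sum, ← Finset.sum_add_distrib]
    refine Finset.sum_congr rfl fun k hk => ?_
    rw [pfaffCoeff_succ m n k (by rw [Finset.mem_range] at hk; omega)]
    ring

/-- A terminating limit case of Pfaff's identity. -/
theorem pfaff_limit_case (m n : ℕ) (x : ℂ) :
    ∑ k ∈ Finset.range (n + 1),
        (ascPochhammer ℂ k).eval ((m : ℂ) + 1) / (k.factorial : ℂ) * (1 - x) ^ k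
      = ((m + n + 1).factorial : ℂ) / (((m + 1).factorial : ℂ) * (n.factorial : ℂ))
        * ∑ k ∈ Finset.range (n + 1),
            (ascPochhammer ℂ k).eval (-(n : ℂ)) * (ascPochhammer ℂ k).eval ((m : ℂ) + 1)
              / ((ascPochhammer ℂ k).eval ((m : ℂ) + 2) * (k.factorial : ℂ)) * x ^ k := by
  rw [Finset.mul_sum]
  simp only [← mul_assoc _ _ (x ^ _), pfaffCoeff_eq]
  rw [← sum_pfaffCoeff]
  refine Finset.sum_congr rfl fun k _ => ?_
  rw [ascPochhammer_eval_natCast_add_one, div_div]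
end

section
/- For all real numbers u, v, x ∈ (0,1), the family (m,n) ↦ u^m v^n (1-x)^{n+1} Σ_{k=0}^{m} C(n+k, k) x^k, indexed by pairs of nonnegative integers (m,n), is summable, and its sum equals (1-x) / ((1-u)(1 - ux - v(1-x))). -/
/-!
Fix `n` and sum over `m` first. Since
`u ^ m * ∑ k ≤ m, C(n+k, k) x ^ k = ∑ k ≤ m, (C(n+k, k) (u x) ^ k) * u ^ (m - k)`,
this row is the Cauchy product of the negative binomial series at `u x` with the geometric
series at `u`, so it sums to `1 / ((1 - u x) ^ (n + 1) (1 - u))` (`hasSum_row`). The row sums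
are then geometric in `n`, with ratio `v (1 - x) / (1 - u x) < 1` because `u x < x` and `v < 1`.
All terms are nonnegative, so convergence of the iterated sum gives summability over `ℕ × ℕ`.
-/

/-- The sum over `m` for fixed `n`, as a Cauchy product. -/
lemma hasSum_row (u x : ℝ) (hu : u ∈ Set.Ioo (0 : ℝ) 1) (hx : x ∈ Set.Ioo (0 : ℝ) 1) (n : ℕ) :
    HasSum (fun m : ℕ => u ^ m * ∑ k ∈ Finset.range (m + 1), ((n + k).choose k : ℝ) * x ^ k)
      (1 / (1 - u * x) ^ (n + 1) * (1 - u)⁻¹) := by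
  obtain ⟨hu0, hu1⟩ := hu
  obtain ⟨hx0, hx1⟩ := hx
  have hux0 : 0 < u * x := mul_pos hu0 hx0
  have hux : ‖u * x‖ < 1 := by
    rw [Real.norm_of_nonneg hux0.le]
    nlinarith
  have hbin := hasSum_choose_mul_geometric_of_norm_lt_one n hux
  have hgeo := hasSum_geometric_of_lt_one hu0.le hu1
  have hcauchy := hasSum_sum_range_mul_of_summable_norm hbin.summable.norm hgeo.summable.norm
  rw [hbin.tsum_eq, hgeo.tsum_eq] at hcauchy
  refine hcauchy.congr_fun ?_
  intro m
  rw [Finset.mul_sum]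
  refine Finset.sum_congr rfl fun k hk => ?_
  have hkm : k ≤ m := Nat.lt_succ_iff.mp (Finset.mem_range.mp hk)
  have hpow : u ^ m = u ^ k * u ^ (m - k) := by rw [← pow_add, Nat.add_sub_cancel' hkm]
  have hchoose : (n + k).choose k = (k + n).choose n := by
    rw [add_comm n k, Nat.choose_symm_add]
  rw [hpow, hchoose, mul_pow]
  ring

/-- Summability and evaluation of the generating function of the
Chaundy–Bullard partial sums. -/
theorem chaundy_bullard_generating_function (u v x : ℝ)
    (hu : u ∈ Set.Ioo (0:ℝ) 1) (hv : v ∈ Set.Ioo (0:ℝ) 1) (hx : x ∈ Set.Ioo (0:ℝ) 1) :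
    Summable (fun p : ℕ × ℕ =>
      u ^ p.1 * v ^ p.2 * (1 - x) ^ (p.2 + 1)
        * ∑ k ∈ Finset.range (p.1 + 1), ((p.2 + k).choose k : ℝ) * x ^ k)
    ∧ (∑' p : ℕ × ℕ,
        u ^ p.1 * v ^ p.2 * (1 - x) ^ (p.2 + 1)
          * ∑ k ∈ Finset.range (p.1 + 1), ((p.2 + k).choose k : ℝ) * x ^ k)
      = (1 - x) / ((1 - u) * (1 - u * x - v * (1 - x))) := by
  have hrow := hasSum_row u x hu hx
  obtain ⟨hu0, hu1⟩ := hu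
  obtain ⟨hv0, hv1⟩ := hv
  obtain ⟨hx0, hx1⟩ := hx
  have h1u : 0 < 1 - u := by linarith
  have h1x : 0 < 1 - x := by linarith
  have hux : 0 < 1 - u * x := by nlinarith
  have hden : 0 < 1 - u * x - v * (1 - x) := by nlinarith [mul_pos h1u hx0]
  set f : ℕ × ℕ → ℝ := fun p =>
      u ^ p.1 * v ^ p.2 * (1 - x) ^ (p.2 + 1)
        * ∑ k ∈ Finset.range (p.1 + 1), ((p.2 + k).choose k : ℝ) * x ^ k with hf
  have hf0 : ∀ p, 0 ≤ f p := fun p => by positivity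
  -- `r` is the ratio of consecutive row sums.
  set r : ℝ := v * (1 - x) / (1 - u * x) with hr
  have hr0 : 0 ≤ r := by positivity
  have hr1 : r < 1 := by rw [hr, div_lt_one hux]; linarith
  have hinner : ∀ n, HasSum (fun m => f (m, n))
      ((1 - x) / ((1 - u) * (1 - u * x)) * r ^ n) := by
    intro n
    have hval : (1 - x) / ((1 - u) * (1 - u * x)) * r ^ n
        = v ^ n * (1 - x) ^ (n + 1) * (1 / (1 - u * x) ^ (n + 1) * (1 - u)⁻¹) := by
      rw [hr, div_pow, mul_pow]
      generalize 1 - u * x = d at hux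
      field_simp
      ring
    rw [hval]
    refine ((hrow n).mul_left (v ^ n * (1 - x) ^ (n + 1))).congr_fun fun m => ?_
    simp only [hf]
    ring
  have houter := (hasSum_geometric_of_lt_one hr0 hr1).mul_left ((1 - x) / ((1 - u) * (1 - u * x)))
  have hswap : Summable (fun p : ℕ × ℕ => f p.swap) := by
    rw [summable_prod_of_nonneg fun p => hf0 p.swap]
    refine ⟨fun n => (hinner n).summable, ?_⟩
    simpa only [Prod.swap_prod_mk, (hinner _).tsum_eq] using houter.summable
  have hsum : Summable f := (Equiv.prodComm ℕ ℕ).summable_iff.mp hswap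
  refine ⟨hsum, ?_⟩
  rw [← (Equiv.prodComm ℕ ℕ).tsum_eq f]
  have htsum := (hswap.hasSum.prod_fiberwise hinner).unique houter
  refine htsum.trans ?_
  have h1r : 1 - r = (1 - u * x - v * (1 - x)) / (1 - u * x) := by
    rw [hr, sub_div, div_self hux.ne']
  rw [h1r, inv_div, div_mul_div_comm, mul_right_comm, mul_div_mul_right _ _ hux.ne']
end

section
/- Let n ≥ 1 be an integer, let a_1, …, a_n be nonnegative integers, and let x_1, …, x_n be complex numbers with x_1 + ⋯ + x_n = 1. Then Σ_{i=1}^{n} x_i · Σ_{k_1=0}^{a_1} ⋯ Σ_{k_n=0}^{a_n} δ_{k_i, a_i} · ( (k_1+⋯+k_n)! / (k_1! ⋯ k_n!) ) · x_1^{k_1} ⋯ x_n^{k_n} = 1, where δ_{k_i, a_i} is the Kronecker delta (so in the i-th summand the index k_i is fixed equal to a_i). -/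
/-!
Write `W k` for the multinomial term `(∑ k)! / ∏ k! * ∏ x ^ k`. Pascal's rule for multinomial
coefficients reads `W k = ∑ i, x i * W (k - e i)` for `k ≠ 0`, the sum being over `i` with
`k i ≠ 0`, while `W 0 = 1`. Summing over the box `B = ∏ [0, a j]` and shifting the index gives
`∑_{k ∈ B} W k = 1 + ∑ i, x i * ∑_{k ∈ B, k i < a i} W k`. Since `∑ i, x i = 1`, the left side
is also `∑ i, x i * ∑_{k ∈ B} W k`; subtracting leaves exactly the faces `k i = a i`.

Probabilistically: a random walk with steps `e i` of weight `x i`, started at `0`, leaves the box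
with total weight one. Pascal's rule is `multinomialTerm_eq_sum_inflow`, and the shift is
`inflow_add_single` and `sum_box_inflow`.
-/

namespace ChaundyBullard

variable {n : ℕ}

/-- The term of multi-index `k` in the expansion of `(∑ i, x i) ^ (∑ i, k i)`. -/
noncomputable def multinomialTerm (x : Fin n → ℂ) (k : Fin n → ℕ) : ℂ :=
  ((∑ j, k j).factorial : ℂ) / (∏ j, ((k j).factorial : ℂ)) * ∏ j, x j ^ k j

/-- The part of `multinomialTerm x k` contributed by a last step in direction `i`. It equals
`x i * multinomialTerm x (k - e i)` if `k i ≠ 0`, and `0` if `k i = 0`; writing it with the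
factor `k i` makes the second case automatic. -/
noncomputable def inflow (x : Fin n → ℂ) (k : Fin n → ℕ) (i : Fin n) : ℂ :=
  (k i : ℂ) * (((∑ j, k j) - 1).factorial : ℂ) / (∏ j, ((k j).factorial : ℂ)) * ∏ j, x j ^ k j

lemma inflow_add_single (x : Fin n → ℂ) (k : Fin n → ℕ) (i : Fin n) :
    inflow x (k + Pi.single i 1) i = x i * multinomialTerm x k := by
  have hsum : ∑ j, (k + Pi.single i 1 : Fin n → ℕ) j = (∑ j, k j) + 1 := by
    simp [Finset.sum_add_distrib]
  have hfac : ∏ j, (((k + Pi.single i 1 : Fin n → ℕ) j).factorial : ℂ)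
      = (k i + 1) * ∏ j, ((k j).factorial : ℂ) := by
    have h : ∀ j, (((k + Pi.single i 1 : Fin n → ℕ) j).factorial : ℂ)
        = (if j = i then (k i + 1 : ℂ) else 1) * ((k j).factorial : ℂ) := by
      intro j
      by_cases hj : j = i
      · subst hj; simp [Nat.factorial_succ]
      · simp [hj]
    simp_rw [h, Finset.prod_mul_distrib]
    simp
  have hpow : ∏ j, x j ^ (k + Pi.single i 1 : Fin n → ℕ) j = x i * ∏ j, x j ^ k j := by
    have h : ∀ j, x j ^ (k + Pi.single i 1 : Fin n → ℕ) j = (if j = i then x i else 1) * x j ^ k j := by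
      intro j
      by_cases hj : j = i
      · subst hj; simp [pow_succ']
      · simp [hj]
    simp_rw [h, Finset.prod_mul_distrib]
    simp
  have h1 : (k i + 1 : ℂ) ≠ 0 := by exact_mod_cast Nat.succ_ne_zero (k i)
  have h2 : ∏ j, ((k j).factorial : ℂ) ≠ 0 :=
    Finset.prod_ne_zero_iff.2 fun j _ => by exact_mod_cast (k j).factorial_ne_zero
  unfold inflow multinomialTerm
  rw [hsum, hfac, hpow]
  simp only [Pi.add_apply, Pi.single_eq_same, Nat.add_sub_cancel]
  push_cast
  field_simp

/-- Pascal's rule for multinomial coefficients, with the origin as the only source. -/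
lemma multinomialTerm_eq_sum_inflow (x : Fin n → ℂ) (k : Fin n → ℕ) :
    multinomialTerm x k = (if k = 0 then 1 else 0) + ∑ i, inflow x k i := by
  by_cases hk : k = 0
  · subst hk; simp [multinomialTerm, inflow]
  · have hpos : (∑ j, k j) ≠ 0 := by
      intro h
      apply hk
      funext j
      simpa using (Finset.sum_eq_zero_iff.1 h) j (Finset.mem_univ j)
    simp only [multinomialTerm, inflow, hk, if_false, zero_add]
    rw [← Finset.sum_mul, ← Finset.sum_div, ← Finset.sum_mul, ← Nat.mul_factorial_pred hpos]
    push_cast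
    rfl

lemma sum_box_inflow (a : Fin n → ℕ) (x : Fin n → ℂ) (i : Fin n) :
    ∑ k ∈ Fintype.piFinset (fun j => Finset.range (a j + 1)), inflow x k i
      = ∑ k ∈ Fintype.piFinset (fun j => Finset.range (a j + 1)) with k i ≠ a i,
          x i * multinomialTerm x k := by
  have h0 : ∑ k ∈ Fintype.piFinset (fun j => Finset.range (a j + 1)) with k i ≠ 0, inflow x k i
      = ∑ k ∈ Fintype.piFinset (fun j => Finset.range (a j + 1)), inflow x k i := by
    apply Finset.sum_filter_of_ne
    intro k _ h hki
    exact h (by simp [inflow, hki])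
  rw [← h0]
  symm
  refine Finset.sum_nbij' (fun k => k + Pi.single i 1) (fun k => k - Pi.single i 1)
    ?_ ?_ ?_ ?_ ?_
  · intro k hk
    simp only [Finset.mem_filter, Fintype.mem_piFinset, Finset.mem_range] at hk ⊢
    refine ⟨fun j => ?_, by simp⟩
    have := hk.1 j
    by_cases hj : j = i
    · subst hj
      have := hk.2
      simp only [Pi.add_apply, Pi.single_eq_same]
      omega
    · simpa [hj] using this
  · intro k hk
    simp only [Finset.mem_filter, Fintype.mem_piFinset, Finset.mem_range] at hk ⊢
    refine ⟨fun j => ?_, ?_⟩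
    · have := hk.1 j
      simp only [Pi.sub_apply]
      omega
    · have := hk.1 i
      have := hk.2
      simp only [Pi.sub_apply, Pi.single_eq_same]
      omega
  · intro k _
    simp
  · intro k hk
    have hki := (Finset.mem_filter.1 hk).2
    funext j
    by_cases hj : j = i
    · subst hj
      simp only [Pi.add_apply, Pi.sub_apply, Pi.single_eq_same]
      omega
    · simp [hj]
  · intro k _
    exact (inflow_add_single x k i).symm

end ChaundyBullard

open ChaundyBullard in
/-- The multivariable Chaundy–Bullard identity of Damjanovic, Klamkin and Ruehr. -/
theorem multivariable_chaundy_bullard (n : ℕ) (hn : 1 ≤ n)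
    (a : Fin n → ℕ) (x : Fin n → ℂ) (hx : ∑ i, x i = 1) :
    ∑ i : Fin n, x i *
      ∑ k ∈ Fintype.piFinset (fun j : Fin n => Finset.range (a j + 1)),
        (if k i = a i then (1 : ℂ) else 0)
          * ((∑ j, k j).factorial : ℂ) / (∏ j, ((k j).factorial : ℂ))
          * ∏ j, x j ^ k j = 1 := by
  set B := Fintype.piFinset (fun j : Fin n => Finset.range (a j + 1)) with hB
  have hface : ∀ i, x i * ∑ k ∈ B, (if k i = a i then (1 : ℂ) else 0)
      * ((∑ j, k j).factorial : ℂ) / (∏ j, ((k j).factorial : ℂ)) * ∏ j, x j ^ k j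
      = x i * ∑ k ∈ B, multinomialTerm x k - ∑ k ∈ B, inflow x k i := by
    intro i
    rw [hB, sum_box_inflow, ← hB, ← Finset.mul_sum, ← mul_sub, Finset.sum_filter,
      ← Finset.sum_sub_distrib]
    congr 1
    refine Finset.sum_congr rfl fun k _ => ?_
    by_cases h : k i = a i <;> simp [h, multinomialTerm]
  have hbalance : ∑ k ∈ B, multinomialTerm x k = 1 + ∑ i, ∑ k ∈ B, inflow x k i := by
    have h0 : (0 : Fin n → ℕ) ∈ B := by simp [hB]
    rw [Finset.sum_congr rfl fun k _ => multinomialTerm_eq_sum_inflow x k,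
      Finset.sum_add_distrib, Finset.sum_comm, Finset.sum_ite_eq' B 0, if_pos h0]
  rw [Finset.sum_congr rfl fun i _ => hface i, Finset.sum_sub_distrib, ← Finset.sum_mul, hx,
    one_mul, hbalance]
  ring
end

section
/- Let n ≥ 1 be an integer and a_1, …, a_n nonnegative integers. For complex numbers x_1, …, x_n with s := x_1 + ⋯ + x_n, define f_{a_1,…,a_n}(x_1,…,x_n) := x_n^{a_n+1} · Σ_{k_1=0}^{a_1} ⋯ Σ_{k_{n-1}=0}^{a_{n-1}} ( (a_n+1)_{k_1+⋯+k_{n-1}} / (k_1! ⋯ k_{n-1}!) ) · x_1^{k_1} ⋯ x_{n-1}^{k_{n-1}} · s^{(a_1+⋯+a_{n-1}) - (k_1+⋯+k_{n-1})}. Then for all complex x_1, …, x_n, (x_1+⋯+x_n)^{a_1+⋯+a_n+1} = Σ_{j=0}^{n-1} f_{a_{σ_j(1)},…,a_{σ_j(n)}}(x_{σ_j(1)},…,x_{σ_j(n)}), where σ_j is the cyclic shift of {1,…,n} given by σ_j(i) = i + j reduced modulo n to lie in {1,…,n}; that is, the sum on the right ranges over all n cyclic permutations of the index set. -/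
/-!
The identity is a decomposition of words by a stopping time. Expand `S ^ (A + 1)`, where
`S = ∑ x i` and `A = ∑ a i`, over words of length `A + 1` in letters `i` of weight `x i`. By the
pigeonhole principle some letter `j` occurs more than `a j` times; stop at the first moment when
this happens. The letter counts `k` just before that moment satisfy `k i ≤ a i` for all `i` and
`k j = a j`, and the words with these data contribute
`((∑ k i)! / ∏ (k i)!) * ∏ x i ^ k i * x j * S ^ (A - ∑ k i)`.
Summing over `k` gives `exitWeight a x j`, which is the summand `chaundyBullardF` of the cyclic
shift bringing `j` to the last place (`chaundyBullardF_eq_exitWeight`).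

The decomposition itself (`pow_eq_sum_exitWeight`) is proved algebraically: the total
`T = ∑_{k ≤ a} ((∑ k i)! / ∏ (k i)!) * ∏ x i ^ k i * S ^ (A + 1 - ∑ k i)` is expanded by writing
one factor `S` as `∑ x j`. The terms with `k j = a j` are the exit weights, and the remaining
ones, reindexed by `k ↦ k + e_j`, sum to `T - S ^ (A + 1)` by the recursion for multinomial
coefficients.
-/

open Polynomial

/-- The function `f_{a_1,…,a_n}(x_1,…,x_n)` of Koornwinder–Schlosser (49),
defined here for `n + 1` variables. -/
noncomputable def chaundyBullardF {n : ℕ} (a : Fin (n + 1) → ℕ) (x : Fin (n + 1) → ℂ) : ℂ :=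
  x (Fin.last n) ^ (a (Fin.last n) + 1) *
    ∑ k ∈ Fintype.piFinset (fun i : Fin n => Finset.range (a i.castSucc + 1)),
      ((ascPochhammer ℂ (∑ i, k i)).eval ((a (Fin.last n) : ℂ) + 1)
          / (∏ i, ((k i).factorial : ℂ)))
        * (∏ i : Fin n, x i.castSucc ^ k i)
        * (∑ j, x j) ^ ((∑ i : Fin n, a i.castSucc) - (∑ i, k i))

section ExitWeight

variable {ι : Type*} [Fintype ι] [DecidableEq ι]

/-- The box of letter counts `k` with `k i ≤ a i` for all `i`. -/
def countBox (a : ι → ℕ) : Finset (ι → ℕ) :=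
  Fintype.piFinset fun i => Finset.range (a i + 1)

theorem mem_countBox {a k : ι → ℕ} : k ∈ countBox a ↔ ∀ i, k i ≤ a i := by
  simp [countBox]

/-- The divided monomial `∏ x i ^ k i / (k i)!`. -/
noncomputable def dividedMonomial (x : ι → ℂ) (k : ι → ℕ) : ℂ :=
  ∏ i, x i ^ k i / ((k i).factorial : ℂ)

/-- The total weight of the words of length `∑ a i + 1` in which `j` is the first letter to
exceed its quota `a j`, sorted by the letter counts `k` just before that happens. -/
noncomputable def exitWeight (a : ι → ℕ) (x : ι → ℂ) (j : ι) : ℂ :=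
  ∑ k ∈ countBox a with k j = a j,
    ((∑ i, k i).factorial : ℂ) * dividedMonomial x k * x j
      * (∑ i, x i) ^ ((∑ i, a i) - ∑ i, k i)

theorem sum_update_succ (k : ι → ℕ) (j : ι) :
    ∑ i, Function.update k j (k j + 1) i = (∑ i, k i) + 1 := by
  rw [Finset.sum_update_of_mem (Finset.mem_univ j),
    ← Finset.add_sum_erase _ k (Finset.mem_univ j), Finset.sdiff_singleton_eq_erase]
  ring

theorem dividedMonomial_update_succ (x : ι → ℂ) (k : ι → ℕ) (j : ι) :
    ((k j + 1 : ℕ) : ℂ) * dividedMonomial x (Function.update k j (k j + 1))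
      = x j * dividedMonomial x k := by
  unfold dividedMonomial
  rw [← Finset.mul_prod_erase _ _ (Finset.mem_univ j),
    ← Finset.mul_prod_erase _ (fun i => x i ^ k i / ((k i).factorial : ℂ)) (Finset.mem_univ j)]
  have h : ∀ i ∈ Finset.univ.erase j,
      x i ^ Function.update k j (k j + 1) i
        / ((Function.update k j (k j + 1) i).factorial : ℂ)
      = x i ^ k i / ((k i).factorial : ℂ) := by
    intro i hi
    rw [Function.update_of_ne (Finset.ne_of_mem_erase hi)]
  rw [Finset.prod_congr rfl h, Function.update_self, Nat.factorial_succ]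
  have h1 : ((k j + 1 : ℕ) : ℂ) ≠ 0 := Nat.cast_ne_zero.2 (Nat.succ_ne_zero _)
  have h2 : ((k j).factorial : ℂ) ≠ 0 := Nat.cast_ne_zero.2 (Nat.factorial_ne_zero _)
  rw [Nat.cast_mul]
  field_simp
  ring

/-- The words that have not yet stopped and continue with the letter `j` without stopping,
reindexed by their letter counts after that step. The sum on the right may run over the whole box
because its terms with `k j = 0` vanish. -/
theorem sum_step (a : ι → ℕ) (x : ι → ℂ) (S : ℂ) (A : ℕ) (j : ι) :
    ∑ k ∈ countBox a with ¬ k j = a j,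
        ((∑ i, k i).factorial : ℂ) * dividedMonomial x k * x j * S ^ (A - ∑ i, k i)
      = ∑ k ∈ countBox a, (k j : ℂ) *
          (((((∑ i, k i) - 1).factorial : ℕ) : ℂ) * dividedMonomial x k
            * S ^ (A + 1 - ∑ i, k i)) := by
  rw [← Finset.sum_filter_add_sum_filter_not (countBox a) (fun k => k j = 0)
    (fun k => (k j : ℂ) * (((((∑ i, k i) - 1).factorial : ℕ) : ℂ) * dividedMonomial x k
            * S ^ (A + 1 - ∑ i, k i)))]
  rw [Finset.sum_eq_zero (s := {k ∈ countBox a | k j = 0}), zero_add]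
  · refine Finset.sum_nbij' (fun k => Function.update k j (k j + 1))
      (fun k => Function.update k j (k j - 1)) ?_ ?_ ?_ ?_ ?_
    · intro k hk
      simp only [Finset.mem_filter, mem_countBox] at hk ⊢
      refine ⟨fun i => ?_, by simp⟩
      rcases eq_or_ne i j with rfl | hi
      · have := hk.1 i
        have := hk.2
        simp only [Function.update_self]
        omega
      · simpa [hi] using hk.1 i
    · intro k hk
      simp only [Finset.mem_filter, mem_countBox] at hk ⊢
      have hj := hk.1 j
      refine ⟨fun i => ?_, ?_⟩
      · rcases eq_or_ne i j with rfl | hi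
        · simp only [Function.update_self]
          omega
        · simpa [hi] using hk.1 i
      · simp only [Function.update_self]
        have := hk.2
        omega
    · intro k _
      simp
    · intro k hk
      simp only [Finset.mem_filter] at hk
      have : k j - 1 + 1 = k j := by
        have := hk.2
        omega
      simp [this]
    · intro k _
      have h := dividedMonomial_update_succ x k j
      simp only [sum_update_succ, Function.update_self, Nat.add_sub_cancel,
        Nat.add_sub_add_right]
      linear_combination (-((∑ i, k i).factorial : ℂ) * S ^ (A - ∑ i, k i)) * h
  · intro k hk
    simp [(Finset.mem_filter.1 hk).2]

theorem pow_eq_sum_exitWeight (a : ι → ℕ) (x : ι → ℂ) :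
    (∑ i, x i) ^ ((∑ i, a i) + 1) = ∑ j, exitWeight a x j := by
  set S := ∑ i, x i with hS
  set A := ∑ i, a i with hA
  have hle : ∀ k ∈ countBox a, ∑ i, k i ≤ A := fun k hk =>
    Finset.sum_le_sum fun i _ => mem_countBox.1 hk i
  -- Split off one factor `S` in the total and sort by the letter it contributes.
  have h1 : ∑ k ∈ countBox a,
        ((∑ i, k i).factorial : ℂ) * dividedMonomial x k * S ^ (A + 1 - ∑ i, k i)
      = ∑ j, ∑ k ∈ countBox a,
        ((∑ i, k i).factorial : ℂ) * dividedMonomial x k * x j * S ^ (A - ∑ i, k i) := by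
    rw [Finset.sum_comm]
    refine Finset.sum_congr rfl fun k hk => ?_
    rw [Nat.succ_sub (hle k hk), pow_succ, ← Finset.sum_mul, ← Finset.mul_sum, ← hS]
    ring
  have h2 : ∀ j, ∑ k ∈ countBox a,
        ((∑ i, k i).factorial : ℂ) * dividedMonomial x k * x j * S ^ (A - ∑ i, k i)
      = exitWeight a x j + ∑ k ∈ countBox a, (k j : ℂ) *
          (((((∑ i, k i) - 1).factorial : ℕ) : ℂ) * dividedMonomial x k
            * S ^ (A + 1 - ∑ i, k i)) := by
    intro j
    rw [← sum_step, exitWeight, ← hS, ← hA, Finset.sum_filter_add_sum_filter_not]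
  have hzero : (0 : ι → ℕ) ∈ countBox a := mem_countBox.2 fun i => Nat.zero_le _
  -- The continuing words make up all of the total except its term at `k = 0`.
  have h3 : ∑ k ∈ countBox a,
        ((∑ i, k i).factorial : ℂ) * dividedMonomial x k * S ^ (A + 1 - ∑ i, k i)
      = S ^ (A + 1) + ∑ j, ∑ k ∈ countBox a, (k j : ℂ) *
          (((((∑ i, k i) - 1).factorial : ℕ) : ℂ) * dividedMonomial x k
            * S ^ (A + 1 - ∑ i, k i)) := by
    rw [Finset.sum_comm]
    simp only [← Finset.sum_mul]
    rw [← Finset.add_sum_erase _ _ hzero, ← Finset.add_sum_erase _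
      (fun k : ι → ℕ => (∑ j, (k j : ℂ)) * (((((∑ i, k i) - 1).factorial : ℕ) : ℂ)
        * dividedMonomial x k * S ^ (A + 1 - ∑ i, k i))) hzero]
    congr 1
    · simp [dividedMonomial]
    · simp only [Pi.zero_apply, Nat.cast_zero, Finset.sum_const_zero, zero_mul, zero_add]
      refine Finset.sum_congr rfl fun k hk => ?_
      have hk0 : ∑ i, k i ≠ 0 := by
        intro h
        apply Finset.ne_of_mem_erase hk
        funext i
        exact (Finset.sum_eq_zero_iff.1 h) i (Finset.mem_univ i)
      rw [← Nat.mul_factorial_pred hk0]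
      push_cast
      ring
  rw [h1] at h3
  simp only [h2] at h3
  rw [Finset.sum_add_distrib] at h3
  exact (add_right_cancel h3).symm

theorem exitWeight_comp_equiv (e : ι ≃ ι) (a : ι → ℕ) (x : ι → ℂ) (j : ι) :
    exitWeight (fun i => a (e i)) (fun i => x (e i)) j = exitWeight a x (e j) := by
  unfold exitWeight
  refine Finset.sum_nbij' (fun k i => k (e.symm i)) (fun k i => k (e i)) ?_ ?_ ?_ ?_ ?_
  · intro k hk
    simp only [Finset.mem_filter, mem_countBox] at hk ⊢
    refine ⟨fun i => ?_, by simpa using hk.2⟩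
    simpa using hk.1 (e.symm i)
  · intro k hk
    simp only [Finset.mem_filter, mem_countBox] at hk ⊢
    exact ⟨fun i => hk.1 (e i), hk.2⟩
  · intro k _
    simp
  · intro k _
    simp
  · intro k _
    have hd : dividedMonomial (fun i => x (e i)) k
        = dividedMonomial x (fun i => k (e.symm i)) := by
      unfold dividedMonomial
      rw [← Equiv.prod_comp e (fun i => x i ^ k (e.symm i) / ((k (e.symm i)).factorial : ℂ))]
      simp
    rw [hd, Equiv.sum_comp e x, Equiv.sum_comp e a, Equiv.sum_comp e.symm k]

end ExitWeight

theorem chaundyBullardF_eq_exitWeight {n : ℕ} (a : Fin (n + 1) → ℕ) (x : Fin (n + 1) → ℂ) :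
    chaundyBullardF a x = exitWeight a x (Fin.last n) := by
  unfold chaundyBullardF exitWeight
  rw [Finset.mul_sum]
  refine Finset.sum_nbij' (fun k => Fin.snoc (α := fun _ => ℕ) k (a (Fin.last n)))
    (fun k i => k i.castSucc) ?_ ?_ ?_ ?_ ?_
  · intro k hk
    simp only [Fintype.mem_piFinset, Finset.mem_range, Nat.lt_succ_iff] at hk
    simp only [Finset.mem_filter, mem_countBox]
    refine ⟨fun i => ?_, by simp⟩
    refine Fin.lastCases ?_ (fun i => ?_) i
    · simp
    · simpa using hk i
  · intro k hk
    simp only [Finset.mem_filter, mem_countBox] at hk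
    simp only [Fintype.mem_piFinset, Finset.mem_range, Nat.lt_succ_iff]
    exact fun i => hk.1 _
  · intro k _
    simp
  · intro k hk
    simp only [Finset.mem_filter] at hk
    funext i
    refine Fin.lastCases ?_ (fun i => ?_) i
    · simp [hk.2]
    · simp
  · intro k _
    have hp : (ascPochhammer ℂ (∑ i, k i)).eval ((a (Fin.last n) : ℂ) + 1)
        = (((a (Fin.last n) + 1).ascFactorial (∑ i, k i) : ℕ) : ℂ) := by
      rw [← ascPochhammer_nat_eq_ascFactorial, ascPochhammer_eval_cast]
      push_cast
      rfl
    have hf : ((a (Fin.last n)).factorial : ℂ)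
          * (((a (Fin.last n) + 1).ascFactorial (∑ i, k i) : ℕ) : ℂ)
        = (((∑ i, k i) + a (Fin.last n)).factorial : ℂ) := by
      rw [← Nat.cast_mul, Nat.factorial_mul_ascFactorial, add_comm]
    have h0 : ((a (Fin.last n)).factorial : ℂ) ≠ 0 :=
      Nat.cast_ne_zero.2 (Nat.factorial_ne_zero _)
    have h1 : (∏ i, ((k i).factorial : ℂ)) ≠ 0 :=
      Finset.prod_ne_zero_iff.2 fun i _ => Nat.cast_ne_zero.2 (Nat.factorial_ne_zero _)
    rw [hp, dividedMonomial, Fin.prod_univ_castSucc, Fin.sum_univ_castSucc (f := a)]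
    rw [Fin.sum_univ_castSucc
      (f := fun i => (Fin.snoc (α := fun _ => ℕ) k (a (Fin.last n)) : Fin (n + 1) → ℕ) i)]
    simp only [Fin.snoc_castSucc, Fin.snoc_last, Nat.add_sub_add_right]
    rw [← hf, Finset.prod_div_distrib]
    field_simp
    ring

/-- The homogeneous form of the multivariable Chaundy–Bullard identity:
the sum on the right ranges over all cyclic shifts of the indices. -/
theorem multivariable_chaundy_bullard_homogeneous (n : ℕ)
    (a : Fin (n + 1) → ℕ) (x : Fin (n + 1) → ℂ) :
    (∑ i, x i) ^ ((∑ i, a i) + 1)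
      = ∑ j : Fin (n + 1),
          chaundyBullardF (fun i => a (i + j)) (fun i => x (i + j)) := by
  rw [pow_eq_sum_exitWeight, ← Equiv.sum_comp (Equiv.addLeft (Fin.last n))]
  refine Finset.sum_congr rfl fun j _ => ?_
  rw [chaundyBullardF_eq_exitWeight]
  exact (exitWeight_comp_equiv (Equiv.addRight j) a x (Fin.last n)).symm
end

section
/- Let n ≥ 2 be an integer and a_1, …, a_n nonnegative integers, and let B := { (k_1,…,k_{n-1}) ∈ ℕ^{n-1} : k_i ≤ a_i for all i }. Suppose γ and γ′ are real-valued functions on B that both satisfy, for every (k_1,…,k_{n-1}) ∈ B, the recurrence ( (a_1-k_1)+⋯+(a_{n-1}-k_{n-1}) ) · ( a_n+1+k_1+⋯+k_{n-1} ) · γ_{k_1,…,k_{n-1}} + Σ_{i : k_i < a_i} (k_i+1)(k_i-a_i) · γ_{k_1,…,k_i+1,…,k_{n-1}} = 0 (note that when k_i = a_i the omitted term has coefficient zero), and suppose γ_{a_1,…,a_{n-1}} = γ′_{a_1,…,a_{n-1}}. Then γ = γ′ on all of B. -/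
/-!
Induction on the distance `d = ∑ (a i - k i)` from `k` to the top corner of the box. If `d = 0`
then `k` is the top corner, where the two functions agree. If `d > 0`, the recurrence at `k`
expresses `γ k` through values at points `k + e_i` of the box, which have distance `d - 1`; the
coefficient of `γ k` is `d` times a positive number, so `γ k` is determined by these values.
-/

/-- Uniqueness, given the top coefficient, of solutions of the recurrence coming from
the Lauricella PDE on the box `B = {k : k i ≤ a i}`.  Here the `n ≥ 2` variables of
the paper are indexed by `Fin (n + 2)`, the first `n + 1` of them via `Fin.castSucc`. -/
theorem lauricella_coefficient_recurrence_unique (n : ℕ) (a : Fin (n + 2) → ℕ)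
    (γ γ' : (Fin (n + 1) → ℕ) → ℝ)
    (hγ : ∀ k : Fin (n + 1) → ℕ, (∀ i, k i ≤ a i.castSucc) →
      (∑ i, ((a i.castSucc : ℝ) - (k i : ℝ)))
          * ((a (Fin.last (n + 1)) : ℝ) + 1 + ∑ i, (k i : ℝ)) * γ k
        + ∑ i ∈ Finset.univ.filter (fun i => k i < a i.castSucc),
            ((k i : ℝ) + 1) * ((k i : ℝ) - (a i.castSucc : ℝ))
              * γ (Function.update k i (k i + 1)) = 0)
    (hγ' : ∀ k : Fin (n + 1) → ℕ, (∀ i, k i ≤ a i.castSucc) →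
      (∑ i, ((a i.castSucc : ℝ) - (k i : ℝ)))
          * ((a (Fin.last (n + 1)) : ℝ) + 1 + ∑ i, (k i : ℝ)) * γ' k
        + ∑ i ∈ Finset.univ.filter (fun i => k i < a i.castSucc),
            ((k i : ℝ) + 1) * ((k i : ℝ) - (a i.castSucc : ℝ))
              * γ' (Function.update k i (k i + 1)) = 0)
    (htop : γ (fun i => a i.castSucc) = γ' (fun i => a i.castSucc)) :
    ∀ k : Fin (n + 1) → ℕ, (∀ i, k i ≤ a i.castSucc) → γ k = γ' k := by
  intro k hk
  induction hd : ∑ i, (a i.castSucc - k i) generalizing k with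
  | zero =>
    have hk_top : k = fun i => a i.castSucc := by
      funext i
      have hi : a i.castSucc - k i = 0 := Finset.sum_eq_zero_iff.mp hd i (Finset.mem_univ i)
      have := hk i
      lia
    rw [hk_top, htop]
  | succ d ih =>
    have hsum : ∑ i ∈ Finset.univ.filter (fun i => k i < a i.castSucc),
          ((k i : ℝ) + 1) * ((k i : ℝ) - (a i.castSucc : ℝ)) * γ (Function.update k i (k i + 1))
        = ∑ i ∈ Finset.univ.filter (fun i => k i < a i.castSucc),
          ((k i : ℝ) + 1) * ((k i : ℝ) - (a i.castSucc : ℝ))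
            * γ' (Function.update k i (k i + 1)) := by
      refine Finset.sum_congr rfl fun i hi => ?_
      have hlt : k i < a i.castSucc := (Finset.mem_filter.mp hi).2
      congr 1
      apply ih
      · intro j
        rcases eq_or_ne j i with rfl | hj
        · simpa using hlt
        · simpa [hj] using hk j
      · rw [← Finset.add_sum_erase _ _ (Finset.mem_univ i)] at hd ⊢
        have hrest : ∑ j ∈ Finset.univ.erase i,
              (a j.castSucc - Function.update k i (k i + 1) j)
            = ∑ j ∈ Finset.univ.erase i, (a j.castSucc - k j) :=
          Finset.sum_congr rfl fun j hj => by
            rw [Function.update_of_ne (Finset.ne_of_mem_erase hj)]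
        rw [hrest, Function.update_self]
        lia
    -- The truncated natural-number distance agrees with the real one because `k ≤ a`.
    have hdist : ∑ i, ((a i.castSucc : ℝ) - (k i : ℝ)) = (d : ℝ) + 1 := by
      rw [← Nat.cast_succ, Nat.succ_eq_add_one, ← hd, Nat.cast_sum]
      exact Finset.sum_congr rfl fun i _ => (Nat.cast_sub (hk i)).symm
    have hcoeff : (∑ i, ((a i.castSucc : ℝ) - (k i : ℝ)))
        * ((a (Fin.last (n + 1)) : ℝ) + 1 + ∑ i, (k i : ℝ)) ≠ 0 := by
      rw [hdist]
      positivity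
    apply mul_left_cancel₀ hcoeff
    linarith [hγ k hk, hγ' k hk]
end

section
/- Let n ≥ 2 be an integer and a_1, …, a_n nonnegative integers. Define w : ℝ^n → ℝ by w(y_1,…,y_n) := y_n^{a_n+1} · Σ_{k_1=0}^{a_1} ⋯ Σ_{k_{n-1}=0}^{a_{n-1}} ( (a_n+1)_{k_1+⋯+k_{n-1}} / (k_1! ⋯ k_{n-1}!) ) · y_1^{k_1} ⋯ y_{n-1}^{k_{n-1}} · s^{(a_1+⋯+a_{n-1}) - (k_1+⋯+k_{n-1})}, where s := y_1+⋯+y_n. Then w satisfies on all of ℝ^n the partial differential equation Σ_{i=1}^{n} y_i (s - y_i) ∂²w/∂y_i² − 2 Σ_{1 ≤ i < j ≤ n} y_i y_j ∂²w/∂y_i∂y_j + Σ_{i=1}^{n} ( (a_1+⋯+a_n) y_i − a_i s ) ∂w/∂y_i = 0. Moreover the function w(y_1,…,y_n) := (y_1+⋯+y_n)^{a_1+⋯+a_n+1} satisfies the same partial differential equation. -/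
/-!
Write `s` for the sum of the variables, `|a|` for the sum of the parameters, and `E = ∑ yᵢ ∂ᵢ`. The
left-hand side of the PDE is `s ∑ᵢ (yᵢ ∂ᵢ² - aᵢ ∂ᵢ) w - E (E - 1) w + |a| E w`. Both functions `w` are
homogeneous polynomials of degree `|a| + 1`, so the last two terms cancel by Euler's identity, and
it remains to show that `w` is killed by `M = ∑ᵢ (yᵢ ∂ᵢ² - aᵢ ∂ᵢ)` (`cbPDE_eval`, `redOp`).

On `y ^ K s ^ m` the operator acts by (`redOp_mono_mul`)
`M (y ^ K s ^ m) = ∑ᵢ Kᵢ (Kᵢ - 1 - aᵢ) y ^ (K - eᵢ) s ^ m + m (2|K| + m - 1 - |a|) y ^ K s ^ (m - 1)`.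
For `K = 0`, `m = |a| + 1` this vanishes. For the sum with coefficients `c_k = (a_n + 1)_{|k|} / k!`,
the direction of `y_n` drops out because its exponent is `a_n + 1`, and the recursion
`(kᵢ + 1) c_{k + eᵢ} = (a_n + 1 + |k|) c_k` (`coef_add_single`) shifts the first sum
(`shift_sum`) into the negative of the second (`redOp_cb`).
-/

/-- Partial derivative in the `i`-th coordinate direction. -/
noncomputable def pd {N : ℕ} (i : Fin N) (f : (Fin N → ℝ) → ℝ) : (Fin N → ℝ) → ℝ :=
  fun y => fderiv ℝ f y (Pi.single i 1)

/-- The left-hand side of the PDE (68) of Koornwinder–Schlosser, for `N` variables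
and parameters `A`. -/
noncomputable def cbPDE {N : ℕ} (A : Fin N → ℕ) (w : (Fin N → ℝ) → ℝ) (y : Fin N → ℝ) : ℝ :=
  (∑ i, y i * ((∑ j, y j) - y i) * pd i (pd i w) y)
    - 2 * ∑ i, ∑ j ∈ Finset.univ.filter (fun j => i < j), y i * y j * pd i (pd j w) y
    + ∑ i, ((∑ j, (A j : ℝ)) * y i - (A i : ℝ) * (∑ j, y j)) * pd i w y

section

open MvPolynomial

/-- On polynomial functions the analytic partial derivative is the formal one, so the PDE becomes an
identity in `MvPolynomial`. -/
theorem pd_eval {N : ℕ} (i : Fin N) (P : MvPolynomial (Fin N) ℝ) :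
    pd i (fun y => eval y P) = fun y => eval y (pderiv i P) := by
  have key : ∀ P : MvPolynomial (Fin N) ℝ, Differentiable ℝ (fun y => eval y P) ∧
      ∀ y, fderiv ℝ (fun y => eval y P) y (Pi.single i 1) = eval y (pderiv i P) := by
    intro P
    induction P using MvPolynomial.induction_on with
    | C a => simp
    | add p q hp hq =>
      simp only [map_add]
      refine ⟨hp.1.add hq.1, fun y => ?_⟩
      rw [fderiv_fun_add (hp.1 y) (hq.1 y)]
      simp [hp.2, hq.2]
    | mul_X p j hp =>
      simp only [map_mul, eval_X]
      have hX : Differentiable ℝ (fun y : Fin N → ℝ => y j) := by fun_prop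
      refine ⟨hp.1.mul hX, fun y => ?_⟩
      rw [fderiv_fun_mul (hp.1 y) (hX y)]
      have hj : fderiv ℝ (fun y : Fin N → ℝ => y j) y = ContinuousLinearMap.proj j :=
        (ContinuousLinearMap.proj (R := ℝ) (φ := fun _ : Fin N => ℝ) j).fderiv
      simp only [hj, add_apply, smul_apply, hp.2,
        ContinuousLinearMap.proj_apply, smul_eq_mul, pderiv_mul, pderiv_X, map_add, map_mul, eval_X]
      by_cases h : j = i
      · subst h; simp; ring
      · simp [h]; ring
  funext y
  exact (key P).2 y

theorem pderiv_pderiv_comm {N : ℕ} (i j : Fin N) (P : MvPolynomial (Fin N) ℝ) :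
    pderiv i (pderiv j P) = pderiv j (pderiv i P) := by
  have h : ⁅pderiv (R := ℝ) i, pderiv (R := ℝ) j⁆ = 0 := by
    apply MvPolynomial.derivation_ext
    intro k
    rw [Derivation.commutator_apply]
    simp only [pderiv_X, Pi.single_apply]
    split_ifs <;> simp
  have := congrArg (fun D => D P) h
  simp only [Derivation.commutator_apply] at this
  exact sub_eq_zero.mp this

/-- The operator `∑ i, (X i ∂ᵢ² - a i ∂ᵢ)` on polynomials, to which the PDE reduces on homogeneous
polynomials of degree `|a| + 1`. -/
noncomputable def redOp {N : ℕ} (a : Fin N → ℕ) (P : MvPolynomial (Fin N) ℝ) :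
    MvPolynomial (Fin N) ℝ :=
  ∑ i, (X i * pderiv i (pderiv i P)
    - C (a i : ℝ) * pderiv i P)

theorem sum_sum_symm {N : ℕ} (F : Fin N → Fin N → ℝ) (hF : ∀ i j, F i j = F j i) :
    ∑ i, ∑ j, F i j = ∑ i, F i i
      + 2 * ∑ i, ∑ j ∈ Finset.univ.filter (fun j => i < j), F i j := by
  have h1 : ∀ i j, F i j = (if i = j then F i j else 0) + (if i < j then F i j else 0)
      + (if j < i then F j i else 0) := by
    intro i j
    rcases lt_trichotomy i j with h | h | h
    · simp [h, h.ne, h.not_gt]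
    · simp [h]
    · simp [h, h.ne', h.not_gt, hF i j]
  have h2 : ∑ i, ∑ j, F i j = ∑ i, ∑ j, ((if i = j then F i j else 0)
      + (if i < j then F i j else 0) + (if j < i then F j i else 0)) :=
    Finset.sum_congr rfl fun i _ => Finset.sum_congr rfl fun j _ => h1 i j
  rw [h2]
  simp only [Finset.sum_add_distrib, Finset.sum_filter]
  rw [Finset.sum_comm (f := fun i j => if j < i then F j i else 0)]
  simp
  ring

/-- Reduction of the PDE: on homogeneous polynomials of degree `|a| + 1` its left-hand side is
`s` times `redOp a`. Euler's identity for each first derivative, of degree `|a|`, gives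
`∑ i j, yᵢ yⱼ ∂ᵢ∂ⱼ P = |a| ∑ i, yᵢ ∂ᵢ P`, which cancels all terms without the factor `s`. -/
theorem cbPDE_eval {N : ℕ} (a : Fin N → ℕ) (P : MvPolynomial (Fin N) ℝ)
    (hP : P.IsHomogeneous ((∑ j, a j) + 1)) (y : Fin N → ℝ) :
    cbPDE a (fun y => eval y P) y = (∑ j, y j) * eval y (redOp a P) := by
  have euler : ∀ i, ∑ j, y j * eval y (pderiv j (pderiv i P))
      = (∑ j, (a j : ℝ)) * eval y (pderiv i P) := by
    intro i
    have h := congrArg (eval y) (hP.pderiv (i := i)).sum_X_mul_pderiv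
    simpa using h
  have hs := sum_sum_symm (fun i j => y i * y j * eval y (pderiv i (pderiv j P)))
    (fun i j => by rw [pderiv_pderiv_comm i j]; ring)
  have hl : ∑ i, ∑ j, y i * y j * eval y (pderiv i (pderiv j P))
      = (∑ j, (a j : ℝ)) * ∑ i, y i * eval y (pderiv i P) := by
    rw [Finset.mul_sum]
    refine Finset.sum_congr rfl fun i _ => ?_
    rw [mul_left_comm, ← euler i, Finset.mul_sum]
    refine Finset.sum_congr rfl fun j _ => ?_
    rw [pderiv_pderiv_comm i j]; ring
  unfold cbPDE redOp
  simp only [pd_eval, map_sum, map_sub, map_mul, eval_X, eval_C]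
  have e1 : ∑ i, y i * ((∑ j, y j) - y i) * eval y (pderiv i (pderiv i P))
      = (∑ j, y j) * (∑ i, y i * eval y (pderiv i (pderiv i P)))
        - ∑ i, y i * y i * eval y (pderiv i (pderiv i P)) := by
    rw [Finset.mul_sum, ← Finset.sum_sub_distrib]
    exact Finset.sum_congr rfl fun i _ => by ring
  have e2 : ∑ i, ((∑ j, (a j : ℝ)) * y i - (a i : ℝ) * (∑ j, y j)) * eval y (pderiv i P)
      = (∑ j, (a j : ℝ)) * (∑ i, y i * eval y (pderiv i P))
        - (∑ j, y j) * ∑ i, (a i : ℝ) * eval y (pderiv i P) := by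
    rw [Finset.mul_sum, Finset.mul_sum, ← Finset.sum_sub_distrib]
    exact Finset.sum_congr rfl fun i _ => by ring
  rw [e1, e2, Finset.sum_sub_distrib]
  linarith

/-- The monomial `∏ j, X j ^ K j`. -/
noncomputable def mono {N : ℕ} (K : Fin N → ℕ) : MvPolynomial (Fin N) ℝ :=
  ∏ j, X j ^ K j

theorem mono_eq {N : ℕ} (K : Fin N → ℕ) :
    mono K = monomial (Finsupp.equivFunOnFinite.symm K) 1 := by
  rw [monomial_eq, mono, Finsupp.prod_fintype _ _ (by simp)]
  simp

theorem pderiv_mono {N : ℕ} (i : Fin N) (K : Fin N → ℕ) :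
    pderiv i (mono K) = C (K i : ℝ) * mono (K - Pi.single i 1) := by
  rw [mono_eq, mono_eq, pderiv_monomial, C_mul_monomial]
  congr 1
  · congr 1
    ext j
    simp [Finsupp.single_apply, Pi.single_apply, eq_comm]
  · simp

theorem X_mul_pderiv_mono {N : ℕ} (i : Fin N) (K : Fin N → ℕ) :
    X i * pderiv i (mono K) = C (K i : ℝ) * mono K := by
  rw [mono_eq, X_mul_pderiv_monomial]
  simp [nsmul_eq_mul]

/-- The truncated subtraction in the exponent is harmless: for `K i = 0` both sides vanish. -/
theorem X_mul_pderiv_pderiv_mono {N : ℕ} (i : Fin N) (K : Fin N → ℕ) :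
    X i * pderiv i (pderiv i (mono K))
      = C ((K i : ℝ) * ((K i : ℝ) - 1)) * mono (K - Pi.single i 1) := by
  rw [pderiv_mono, pderiv_C_mul, mul_left_comm, X_mul_pderiv_mono, ← mul_assoc, ← C_mul]
  rcases Nat.eq_zero_or_pos (K i) with h | h
  · simp [h]
  · simp [Nat.cast_sub h]

/-- The sum of all variables. -/
noncomputable def varSum (N : ℕ) : MvPolynomial (Fin N) ℝ := ∑ j, X j

theorem pderiv_varSum_pow {N : ℕ} (i : Fin N) (m : ℕ) :
    pderiv i (varSum N ^ m) = C (m : ℝ) * varSum N ^ (m - 1) := by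
  have : pderiv i (varSum N) = 1 := by
    simp [varSum, pderiv_X, Pi.single_apply]
  rw [pderiv_pow, this]
  simp

/-- The action of `redOp a` on `X ^ K * s ^ m`; truncated exponents only occur with coefficient `0`. -/
theorem redOp_mono_mul {N : ℕ} (a K : Fin N → ℕ) (m : ℕ) :
    redOp a (mono K * varSum N ^ m)
      = ∑ i, C ((K i : ℝ) * ((K i : ℝ) - 1 - a i)) * mono (K - Pi.single i 1) * varSum N ^ m
        + C ((m : ℝ) * (2 * (∑ i, (K i : ℝ)) + m - 1 - ∑ i, (a i : ℝ)))
          * mono K * varSum N ^ (m - 1) := by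
  have hm : varSum N * (C (m : ℝ) * (C ((m - 1 : ℕ) : ℝ) * varSum N ^ (m - 1 - 1)))
      = C ((m : ℝ) * (m - 1)) * varSum N ^ (m - 1) := by
    rcases m with _ | _ | m
    · simp
    · simp
    · simp only [Nat.add_sub_cancel, pow_succ]
      simp
      ring
  have hi : ∀ i, X i * pderiv i (pderiv i (mono K * varSum N ^ m))
      - C (a i : ℝ) * pderiv i (mono K * varSum N ^ m)
      = C ((K i : ℝ) * ((K i : ℝ) - 1 - a i)) * mono (K - Pi.single i 1) * varSum N ^ m
        + C (2 * m * (K i : ℝ)) * (mono K * varSum N ^ (m - 1))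
        - C ((a i : ℝ)) * (C (m : ℝ) * mono K * varSum N ^ (m - 1))
        + X i * (mono K * (C (m : ℝ) * (C ((m - 1 : ℕ) : ℝ) * varSum N ^ (m - 1 - 1)))) := by
    intro i
    have h1 := X_mul_pderiv_mono i K
    have h2 := X_mul_pderiv_pderiv_mono i K
    have h3 := pderiv_mono i K
    simp only [pderiv_mul, map_add, pderiv_varSum_pow, pderiv_C, zero_mul, zero_add] at *
    have e : C ((K i : ℝ) * ((K i : ℝ) - 1 - a i)) * mono (K - Pi.single i 1)
        = X i * pderiv i (pderiv i (mono K)) - C (a i : ℝ) * pderiv i (mono K) := by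
      rw [h2, h3]
      simp only [C_mul, C_sub]; ring
    have e2 : C (2 * m * (K i : ℝ)) * (mono K * varSum N ^ (m - 1))
        = 2 * C (m : ℝ) * (X i * pderiv i (mono K)) * varSum N ^ (m - 1) := by
      rw [h1]
      simp only [C_mul, map_ofNat]; ring
    rw [e, e2]
    ring
  unfold redOp
  rw [Finset.sum_congr rfl fun i _ => hi i]
  simp only [Finset.sum_add_distrib, Finset.sum_sub_distrib, ← Finset.sum_mul]
  have : (∑ i, X i : MvPolynomial (Fin N) ℝ) = varSum N := rfl
  rw [this, mul_left_comm (varSum N), hm]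
  simp only [C_mul, C_sub, C_add, map_sum, map_ofNat, ← Finset.mul_sum]
  simp only [map_one]
  ring

theorem redOp_sum {N : ℕ} {ι : Type*} (a : Fin N → ℕ) (s : Finset ι) (c : ι → ℝ)
    (P : ι → MvPolynomial (Fin N) ℝ) :
    redOp a (∑ k ∈ s, C (c k) * P k) = ∑ k ∈ s, C (c k) * redOp a (P k) := by
  unfold redOp
  simp only [map_sum, pderiv_C_mul, Finset.mul_sum, Finset.sum_sub_distrib, mul_sub]
  congr 1 <;> rw [Finset.sum_comm] <;>
    exact Finset.sum_congr rfl fun i _ => Finset.sum_congr rfl fun j _ => by ring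

theorem mono_homog {N : ℕ} (K : Fin N → ℕ) : (mono K).IsHomogeneous (∑ i, K i) :=
  IsHomogeneous.prod _ _ _ fun i _ => by simpa using (isHomogeneous_X ℝ i).pow (K i)

theorem varSum_homog (N : ℕ) : (varSum N).IsHomogeneous 1 :=
  IsHomogeneous.sum _ _ _ fun i _ => isHomogeneous_X ℝ i

/-- The coefficient `(A + 1)_{|k|} / ∏ i, (k i)!`. -/
noncomputable def coef {n : ℕ} (A : ℕ) (k : Fin n → ℕ) : ℝ :=
  (ascPochhammer ℝ (∑ i, k i)).eval ((A : ℝ) + 1) / ∏ i, ((k i).factorial : ℝ)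

theorem sum_add_single {n : ℕ} (k : Fin n → ℕ) (i : Fin n) :
    ∑ j, (k + Pi.single i 1 : Fin n → ℕ) j = (∑ j, k j) + 1 := by
  simp [Finset.sum_add_distrib]

/-- The recursion `(kᵢ + 1) c_{k + eᵢ} = (A + 1 + |k|) c_k`, which drives the telescoping. -/
theorem coef_add_single {n : ℕ} (A : ℕ) (k : Fin n → ℕ) (i : Fin n) :
    coef A (k + Pi.single i 1) * ((k i : ℝ) + 1)
      = coef A k * ((A : ℝ) + 1 + ((∑ j, k j : ℕ) : ℝ)) := by
  have hprod : ∏ j, (((k + Pi.single i 1 : Fin n → ℕ) j).factorial : ℝ)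
      = ((k i : ℝ) + 1) * ∏ j, ((k j).factorial : ℝ) := by
    have h : ∀ j, (((k + Pi.single i 1 : Fin n → ℕ) j).factorial : ℝ)
        = (if j = i then (k i : ℝ) + 1 else 1) * ((k j).factorial : ℝ) := by
      intro j
      by_cases hj : j = i
      · subst hj; simp [Nat.factorial_succ]
      · simp [hj]
    rw [Finset.prod_congr rfl fun j _ => h j, Finset.prod_mul_distrib]
    simp
  have h1 : (k i : ℝ) + 1 ≠ 0 := by positivity
  have h2 : ∏ j, ((k j).factorial : ℝ) ≠ 0 :=
    Finset.prod_ne_zero_iff.mpr fun j _ => by positivity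
  unfold coef
  rw [hprod, sum_add_single, ascPochhammer_succ_eval]
  field_simp

/-- Reindexing `k ↦ k + eᵢ` over the box `0 ≤ k ≤ b`. The boundary terms do not contribute: those
with `k i = 0` on the left and those with `k i = b i` on the right have coefficient `0`. -/
theorem shift_sum {n : ℕ} (b : Fin n → ℕ) (A T : ℕ) (i : Fin n) :
    ∑ k ∈ Fintype.piFinset (fun i => Finset.range (b i + 1)),
      C (coef A k * (k i : ℝ) * ((k i : ℝ) - 1 - b i))
        * mono ((Fin.snoc k (A + 1) : Fin (n + 1) → ℕ) - Pi.single i.castSucc 1)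
        * varSum (n + 1) ^ (T - ∑ j, k j)
    = ∑ k ∈ Fintype.piFinset (fun i => Finset.range (b i + 1)),
      C (coef A k * ((A : ℝ) + 1 + ((∑ j, k j : ℕ) : ℝ)) * ((k i : ℝ) - b i))
        * mono (Fin.snoc k (A + 1) : Fin (n + 1) → ℕ)
        * varSum (n + 1) ^ (T - (∑ j, k j) - 1) := by
  -- Termwise identity behind the reindexing; it holds for every `k`, also outside the box.
  have hval : ∀ k : Fin n → ℕ,
      C (coef A k * ((A : ℝ) + 1 + ((∑ j, k j : ℕ) : ℝ)) * ((k i : ℝ) - b i))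
        * mono (Fin.snoc k (A + 1) : Fin (n + 1) → ℕ)
        * varSum (n + 1) ^ (T - (∑ j, k j) - 1)
      = C (coef A (k + Pi.single i 1) * ((k + Pi.single i 1 : Fin n → ℕ) i : ℝ)
          * (((k + Pi.single i 1 : Fin n → ℕ) i : ℝ) - 1 - b i))
        * mono ((Fin.snoc (k + Pi.single i 1) (A + 1) : Fin (n + 1) → ℕ) - Pi.single i.castSucc 1)
        * varSum (n + 1) ^ (T - ∑ j, (k + Pi.single i 1 : Fin n → ℕ) j) := by
    intro k
    have hmono : (Fin.snoc (k + Pi.single i 1) (A + 1) : Fin (n + 1) → ℕ)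
        - Pi.single i.castSucc 1 = Fin.snoc k (A + 1) := by
      ext j
      refine Fin.lastCases ?_ (fun j => ?_) j
      · simp
      · by_cases hj : j = i
        · subst hj; simp
        · simp [hj]
    rw [hmono, sum_add_single, ← Nat.sub_sub, ← coef_add_single]
    congr 3
    simp only [Pi.add_apply, Pi.single_eq_same]
    push_cast
    ring
  symm
  refine Finset.sum_bij_ne_zero (fun k _ _ => k + Pi.single i 1) ?_ ?_ ?_ ?_
  · intro k hk hne
    have hki : k i ≠ b i := fun h => hne (by simp [h])
    rw [Fintype.mem_piFinset] at hk ⊢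
    intro j
    have := hk j
    rw [Finset.mem_range] at this ⊢
    by_cases hj : j = i
    · subst hj; simp; omega
    · simpa [hj] using this
  · intro k _ _ l _ _ h
    exact add_right_cancel h
  · intro k hk hne
    have hki : k i ≠ 0 := fun h => hne (by simp [h])
    have e : k - Pi.single i 1 + Pi.single i 1 = k := by
      ext j
      by_cases hj : j = i
      · subst hj; simp; omega
      · simp [hj]
    refine ⟨k - Pi.single i 1, ?_, ?_, e⟩
    · rw [Fintype.mem_piFinset] at hk ⊢
      intro j
      have := hk j
      rw [Finset.mem_range] at this ⊢
      exact lt_of_le_of_lt (Nat.sub_le _ _) this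
    · rw [hval, e]
      exact hne
  · intro k _ _
    exact hval k

/-- The polynomial of the theorem is annihilated by `redOp a`: after the shift in each direction, the
first sum of `redOp_mono_mul` is `∑ k, c_k (A + 1 + |k|) (|k| - |b|) y ^ K s ^ (|b| - |k| - 1)`, with
`b` the first `n` entries of `a`, which is the negative of the second. -/
theorem redOp_cb {n : ℕ} (a : Fin (n + 1) → ℕ) :
    redOp a (∑ k ∈ Fintype.piFinset (fun i : Fin n => Finset.range (a i.castSucc + 1)),
      C (coef (a (Fin.last n)) k) * (mono (Fin.snoc k (a (Fin.last n) + 1) : Fin (n + 1) → ℕ)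
        * varSum (n + 1) ^ ((∑ i : Fin n, a i.castSucc) - ∑ i, k i))) = 0 := by
  rw [redOp_sum]
  simp only [redOp_mono_mul, mul_add, Finset.sum_add_distrib, Fin.sum_univ_castSucc,
    Fin.snoc_castSucc, Fin.snoc_last]
  -- The exponent `A + 1` of the last variable is the root that makes its direction drop out.
  have hlast : ((a (Fin.last n) + 1 : ℕ) : ℝ) - 1 - a (Fin.last n) = 0 := by push_cast; ring
  simp only [hlast, mul_zero, C_0, zero_mul, add_zero, Finset.sum_const_zero, Finset.mul_sum,
    ← mul_assoc, ← C_mul]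
  rw [Finset.sum_comm]
  rw [Finset.sum_congr rfl fun i _ => shift_sum (fun i : Fin n => a i.castSucc) _ _ i]
  rw [Finset.sum_comm, ← Finset.sum_add_distrib]
  refine Finset.sum_eq_zero fun k hk => ?_
  have hle : ∑ i, k i ≤ ∑ i : Fin n, a i.castSucc := Finset.sum_le_sum fun i _ => by
    have := Fintype.mem_piFinset.mp hk i
    rw [Finset.mem_range] at this
    omega
  simp only [← Finset.sum_mul, ← map_sum, ← Finset.mul_sum, Finset.sum_sub_distrib]
  rw [← add_mul, ← add_mul, ← C_add, Nat.cast_sub hle]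
  push_cast
  convert zero_mul _
  convert zero_mul _
  rw [C_eq_zero]
  ring

end

open Polynomial

/-- Both `f_{a_1,…,a_n}` and `(y_1+⋯+y_n)^{a_1+⋯+a_n+1}` satisfy the PDE (68).
Here the `n ≥ 2` variables of the paper are indexed by `Fin (n + 2)`,
the first `n + 1` of them via `Fin.castSucc`. -/
theorem chaundy_bullard_pde (n : ℕ) (a : Fin (n + 2) → ℕ) :
    (∀ y : Fin (n + 2) → ℝ,
      cbPDE a (fun y =>
        y (Fin.last (n + 1)) ^ (a (Fin.last (n + 1)) + 1) *
          ∑ k ∈ Fintype.piFinset (fun i : Fin (n + 1) => Finset.range (a i.castSucc + 1)),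
            ((ascPochhammer ℝ (∑ i, k i)).eval ((a (Fin.last (n + 1)) : ℝ) + 1)
                / ∏ i, ((k i).factorial : ℝ))
              * (∏ i : Fin (n + 1), y i.castSucc ^ k i)
              * (∑ j, y j) ^ ((∑ i : Fin (n + 1), a i.castSucc) - (∑ i, k i))) y = 0)
    ∧ (∀ y : Fin (n + 2) → ℝ,
        cbPDE a (fun y => (∑ j, y j) ^ ((∑ j, a j) + 1)) y = 0) := by
  constructor
  · intro y
    have hfun : (fun y : Fin (n + 2) → ℝ =>
        y (Fin.last (n + 1)) ^ (a (Fin.last (n + 1)) + 1) *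
          ∑ k ∈ Fintype.piFinset (fun i : Fin (n + 1) => Finset.range (a i.castSucc + 1)),
            ((ascPochhammer ℝ (∑ i, k i)).eval ((a (Fin.last (n + 1)) : ℝ) + 1)
                / ∏ i, ((k i).factorial : ℝ))
              * (∏ i : Fin (n + 1), y i.castSucc ^ k i)
              * (∑ j, y j) ^ ((∑ i : Fin (n + 1), a i.castSucc) - (∑ i, k i)))
        = fun y => MvPolynomial.eval y (∑ k ∈ Fintype.piFinset
            (fun i : Fin (n + 1) => Finset.range (a i.castSucc + 1)),
          MvPolynomial.C (coef (a (Fin.last (n + 1))) k)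
            * (mono (Fin.snoc k (a (Fin.last (n + 1)) + 1) : Fin (n + 2) → ℕ)
              * varSum (n + 2) ^ ((∑ i : Fin (n + 1), a i.castSucc) - ∑ i, k i))) := by
      funext y
      rw [map_sum, Finset.mul_sum]
      refine Finset.sum_congr rfl fun k _ => ?_
      have hS : MvPolynomial.eval y (varSum (n + 2)) = ∑ j, y j := by simp [varSum]
      rw [map_mul, map_mul, map_pow, hS, MvPolynomial.eval_C, mono, map_prod,
        Fin.prod_univ_castSucc (n := n + 1)]
      simp only [map_pow, MvPolynomial.eval_X, Fin.snoc_castSucc, Fin.snoc_last, coef]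
      ring
    rw [hfun, cbPDE_eval, redOp_cb, map_zero, mul_zero]
    refine MvPolynomial.IsHomogeneous.sum _ _ _ fun k hk => ?_
    have hle : ∑ i, k i ≤ ∑ i : Fin (n + 1), a i.castSucc := Finset.sum_le_sum fun i _ => by
      have := Fintype.mem_piFinset.mp hk i
      rw [Finset.mem_range] at this
      omega
    have h := (MvPolynomial.isHomogeneous_C _ (coef (a (Fin.last (n + 1))) k)).mul
      ((mono_homog (Fin.snoc k (a (Fin.last (n + 1)) + 1) : Fin (n + 2) → ℕ)).mul
        ((varSum_homog (n + 2)).pow ((∑ i : Fin (n + 1), a i.castSucc) - ∑ i, k i)))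
    convert h using 1
    rw [Fin.sum_univ_castSucc, Fin.sum_univ_castSucc (n := n + 1)]
    simp only [Fin.snoc_castSucc, Fin.snoc_last]
    omega
  · intro y
    have hfun : (fun y : Fin (n + 2) → ℝ => (∑ j, y j) ^ ((∑ j, a j) + 1))
        = fun y => MvPolynomial.eval y (mono 0 * varSum (n + 2) ^ ((∑ j, a j) + 1)) := by
      funext y
      simp [varSum, mono]
    rw [hfun, cbPDE_eval, redOp_mono_mul]
    · simp
    · simpa using (mono_homog (0 : Fin (n + 2) → ℕ)).mul
        ((varSum_homog (n + 2)).pow ((∑ j, a j) + 1))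
end

section
/- Let n ≥ 1 be an integer, let a_1, …, a_n, b be nonnegative integers, and let x = (x_1,…,x_n) ∈ ℝ^n satisfy x_i > 0 for all i and x_1+⋯+x_n < 1. Let Δ_n^{(n)}(x) ⊂ ℝ^n be the convex hull of the n+1 points {x, 0, e_1, …, e_{n-1}} (where e_i are the standard basis vectors of ℝ^n). Then ∫_{Δ_n^{(n)}(x)} t_1^{a_1} ⋯ t_n^{a_n} (1 - t_1 - ⋯ - t_n)^{b} dt = ( a_1! ⋯ a_n! · b! / (a_1+⋯+a_n+b+n)! ) · x_n^{a_n+1} · Σ_{k_1=0}^{a_1} ⋯ Σ_{k_{n-1}=0}^{a_{n-1}} Σ_{l=0}^{b} ( (a_n+1)_{k_1+⋯+k_{n-1}+l} / (k_1! ⋯ k_{n-1}! · l!) ) · x_1^{k_1} ⋯ x_{n-1}^{k_{n-1}} · (1 - x_1 - ⋯ - x_n)^{l}, where the integral is with respect to Lebesgue measure on ℝ^n. -/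
/-!
The linear map fixing `e_1, …, e_{n-1}` and sending `e_n` to `x` has determinant `x_n` and carries
the standard corner simplex `{v ≥ 0, ∑ v ≤ 1}` onto the simplex with vertices
`x, 0, e_1, …, e_{n-1}` (`integral_corner_eq`). With `t` the image of `v`,
`t_j = v_j + v_n x_j` for `j < n`, `t_n = v_n x_n`, and
`1 - ∑ t = (1 - ∑ v) + v_n (1 - ∑ x)`. Expanding the powers of these binomials turns the integrand
into a linear combination of monomials in `v` and `1 - ∑ v`, each of which is integrated by the
classical Dirichlet formula (`dirichlet_integral`). That formula is proved by induction on the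
dimension, integrating out one coordinate with the Beta integral. The total degree of the monomials
is constant, so the denominators agree, and the exponent `a_n + ∑ k + l` of `v_n` gives the factorial
`a_n! (a_n + 1)_{∑ k + l}`.
-/

open Polynomial MeasureTheory

/-- The corner simplex `{u ≥ 0, ∑ u ≤ c}`. -/
def cornerSimplex (n : ℕ) (c : ℝ) : Set (Fin n → ℝ) := {u | (∀ i, 0 ≤ u i) ∧ ∑ i, u i ≤ c}

lemma isCompact_cornerSimplex (n : ℕ) (c : ℝ) : IsCompact (cornerSimplex n c) := by
  refine (isCompact_Icc (a := (0 : Fin n → ℝ)) (b := fun _ => c)).of_isClosed_subset ?_ ?_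
  · have : cornerSimplex n c = (⋂ i, {u | 0 ≤ u i}) ∩ {u | ∑ i, u i ≤ c} := by
      ext u; simp [cornerSimplex]
    rw [this]
    refine (isClosed_iInter fun i => isClosed_le continuous_const (continuous_apply i)).inter
      (isClosed_le (by fun_prop) continuous_const)
  · rintro u ⟨h0, h1⟩
    exact ⟨h0, fun i =>
      (Finset.single_le_sum (fun j _ => h0 j) (Finset.mem_univ i)).trans h1⟩

/-- The Beta integral at integer parameters, by repeated integration by parts. -/
lemma beta_integral (p q : ℕ) (c : ℝ) :
    ∫ t in (0 : ℝ)..c, t ^ p * (c - t) ^ q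
      = (p.factorial * q.factorial / (p + q + 1).factorial : ℝ) * c ^ (p + q + 1) := by
  induction p generalizing q with
  | zero =>
    have h : ∫ t in (0 : ℝ)..c, (c - t) ^ q = c ^ (q + 1) / (q + 1) := by
      rw [intervalIntegral.integral_comp_sub_left (fun t => t ^ q) c]
      simp
    simp only [pow_zero, one_mul, h, zero_add, Nat.factorial_succ q, Nat.factorial_zero]
    have := Nat.factorial_ne_zero q
    push_cast
    field_simp
  | succ p ih =>
    have hparts := intervalIntegral.integral_mul_deriv_eq_deriv_mul (a := (0 : ℝ)) (b := c)
      (u := fun t => t ^ (p + 1)) (u' := fun t => (p + 1 : ℝ) * t ^ p)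
      (v := fun t => -((c - t) ^ (q + 1) / (q + 1))) (v' := fun t => (c - t) ^ q)
      (fun t _ => by simpa using hasDerivAt_pow (p + 1) t)
      (fun t _ => by
        have h := ((((hasDerivAt_id t).const_sub c).pow (q + 1)).div_const ((q : ℝ) + 1)).neg
        have hq : (q : ℝ) + 1 ≠ 0 := by positivity
        exact h.congr_deriv (by simp; field_simp))
      (by apply Continuous.intervalIntegrable; fun_prop)
      (by apply Continuous.intervalIntegrable; fun_prop)
    rw [hparts]
    have : ∫ t in (0 : ℝ)..c, (p + 1 : ℝ) * t ^ p * -((c - t) ^ (q + 1) / (q + 1))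
        = -((p + 1 : ℝ) / (q + 1)) * ∫ t in (0 : ℝ)..c, t ^ p * (c - t) ^ (q + 1) := by
      rw [← intervalIntegral.integral_const_mul]
      congr 1; ext t; ring
    rw [this, ih]
    have e : p + 1 + q + 1 = p + (q + 1) + 1 := by ring
    rw [e, Nat.factorial_succ p, Nat.factorial_succ q]
    have := Nat.factorial_ne_zero (p + (q + 1) + 1)
    push_cast
    simp
    field_simp

/-- The Dirichlet integral. The scale `c` is left free because the slices of the simplex of size `c`
at height `t` are simplices of size `c - t`. -/
lemma dirichlet_integral (n : ℕ) (α : Fin n → ℕ) (β : ℕ) (c : ℝ) (hc : 0 ≤ c) :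
    ∫ u in cornerSimplex n c, (∏ j, u j ^ α j) * (c - ∑ j, u j) ^ β
      = ((∏ j, ((α j).factorial : ℝ)) * β.factorial / ((∑ j, α j) + β + n).factorial)
        * c ^ ((∑ j, α j) + β + n) := by
  induction n generalizing c with
  | zero =>
    have : cornerSimplex 0 c = Set.univ := by ext; simp [cornerSimplex, hc]
    have := Nat.factorial_ne_zero β
    have hv : (volume : Measure (Fin 0 → ℝ)) Set.univ = 1 := by
      rw [volume_pi, Measure.pi_univ]; simp
    simp [*, integral_unique, measureReal_def]
  | succ n ih =>
    set f : (Fin (n + 1) → ℝ) → ℝ := fun u => (∏ j, u j ^ α j) * (c - ∑ j, u j) ^ β with hf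
    have hfc : Continuous f := by fun_prop
    have hms : MeasurableSet (cornerSimplex (n + 1) c) := (isCompact_cornerSimplex _ _).measurableSet
    have hint : Integrable ((cornerSimplex (n + 1) c).indicator f) :=
      (integrable_indicator_iff hms).2
        (hfc.continuousOn.integrableOn_compact (isCompact_cornerSimplex _ _))
    have hmp := (volume_preserving_piFinSuccAbove (fun _ : Fin (n + 1) => ℝ) 0).symm
    rw [← integral_indicator hms, ← hmp.integral_comp (MeasurableEquiv.measurableEmbedding _),
      Measure.volume_eq_prod, integral_prod]
    swap
    · exact hmp.integrable_comp_of_integrable hint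
    have hinner : ∀ t : ℝ, (∫ u : Fin n → ℝ, (cornerSimplex (n + 1) c).indicator f
          ((MeasurableEquiv.piFinSuccAbove (fun _ : Fin (n + 1) => ℝ) 0).symm (t, u)))
        = (Set.Icc 0 c).indicator (fun t => t ^ α 0 *
          (((∏ j : Fin n, ((α j.succ).factorial : ℝ)) * β.factorial
            / ((∑ j : Fin n, α j.succ) + β + n).factorial)
          * (c - t) ^ ((∑ j : Fin n, α j.succ) + β + n))) t := by
      intro t
      by_cases ht : t ∈ Set.Icc 0 c
      · rw [Set.indicator_of_mem ht, ← ih _ _ (sub_nonneg.2 ht.2), ← integral_const_mul,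
          ← integral_indicator (isCompact_cornerSimplex _ _).measurableSet]
        congr 1; ext u
        have hm : (MeasurableEquiv.piFinSuccAbove (fun _ : Fin (n + 1) => ℝ) 0).symm (t, u)
            ∈ cornerSimplex (n + 1) c ↔ u ∈ cornerSimplex n (c - t) := by
          simp [cornerSimplex, MeasurableEquiv.piFinSuccAbove, Fin.forall_fin_succ,
            Fin.sum_univ_succ, ht.1, le_sub_iff_add_le']
        by_cases hu : u ∈ cornerSimplex n (c - t)
        · rw [Set.indicator_of_mem hu, Set.indicator_of_mem (hm.2 hu)]
          simp [hf, MeasurableEquiv.piFinSuccAbove, Fin.prod_univ_succ, Fin.sum_univ_succ,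
            sub_sub, mul_assoc]
        · rw [Set.indicator_of_notMem hu, Set.indicator_of_notMem (mt hm.1 hu)]
      · rw [Set.indicator_of_notMem ht]
        rw [← integral_zero (Fin n → ℝ) ℝ]
        congr 1; ext u
        apply Set.indicator_of_notMem
        rintro ⟨h0, h1⟩
        simp [MeasurableEquiv.piFinSuccAbove, Fin.forall_fin_succ, Fin.sum_univ_succ] at h0 h1
        exact ht ⟨h0.1, by linarith [Finset.sum_nonneg fun i (_ : i ∈ Finset.univ) => h0.2 i]⟩
    refine (integral_congr_ae (.of_forall hinner)).trans ?_
    rw [integral_indicator measurableSet_Icc, integral_Icc_eq_integral_Ioc,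
      ← intervalIntegral.integral_of_le hc]
    simp_rw [mul_left_comm (_ ^ α 0)]
    rw [intervalIntegral.integral_const_mul, beta_integral, Fin.prod_univ_succ, Fin.sum_univ_succ]
    have e : α 0 + ∑ i : Fin n, α i.succ + β + (n + 1)
      = α 0 + ((∑ i : Fin n, α i.succ) + β + n) + 1 := by ring
    rw [e]
    have := Nat.factorial_ne_zero ((∑ i : Fin n, α i.succ) + β + n)
    field_simp

lemma convexHull_corner (n : ℕ) :
    convexHull ℝ (insert 0 (Set.range fun j : Fin n => Pi.single j (1 : ℝ)))
      = cornerSimplex n 1 := by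
  apply Set.Subset.antisymm
  · apply convexHull_min
    · rintro u (rfl | ⟨j, rfl⟩)
      · simp [cornerSimplex]
      · refine ⟨fun i => ?_, by simp⟩
        simp only [Pi.single_apply]; split_ifs <;> simp
    · rintro u ⟨hu0, hu1⟩ v ⟨hv0, hv1⟩ p q hp hq hpq
      refine ⟨fun i => by have := hu0 i; have := hv0 i; simp; positivity, ?_⟩
      simp only [Pi.add_apply, Pi.smul_apply, smul_eq_mul, Finset.sum_add_distrib,
        ← Finset.mul_sum]
      nlinarith
  · rintro u ⟨h0, h1⟩
    have := (convex_convexHull ℝ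
      (insert 0 (Set.range fun j : Fin n => (Pi.single j (1 : ℝ) : Fin n → ℝ)))).sum_mem
      (t := Finset.univ) (w := fun o : Option (Fin n) => o.elim (1 - ∑ i, u i) u)
      (z := fun o => o.elim 0 (fun j => Pi.single j 1))
      (by rintro (_ | j) _ <;> simp [h0, h1]) (by simp [Fintype.sum_option])
      (by
        rintro (_ | j) _
        · exact subset_convexHull _ _ (Or.inl rfl)
        · exact subset_convexHull _ _ (Or.inr ⟨j, rfl⟩))
    convert this using 1
    ext i
    simp [Fintype.sum_option, Pi.single_apply]

/-- Change of variables along the linear map fixing `e_1, …, e_{n-1}` and sending `e_n` to `x`. -/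
lemma integral_corner_eq (m : ℕ) (x : Fin (m + 1) → ℝ) (hx : 0 < x (Fin.last m))
    (g : (Fin (m + 1) → ℝ) → ℝ) :
    ∫ t in convexHull ℝ (insert x (insert 0
          (Set.range fun j : Fin m => Pi.single j.castSucc (1 : ℝ)))), g t
      = x (Fin.last m) * ∫ v in cornerSimplex (m + 1) 1,
          g (Fin.snoc (fun j : Fin m => v j.castSucc + v (Fin.last m) * x j.castSucc)
            (v (Fin.last m) * x (Fin.last m))) := by
  set M : Matrix (Fin (m + 1)) (Fin (m + 1)) ℝ :=
    Matrix.of fun i j => if j = Fin.last m then x i else if i = j then 1 else 0 with hM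
  have hdet : M.det = x (Fin.last m) := by
    rw [Matrix.det_of_isUpperTriangular, Fin.prod_univ_castSucc]
    · simp [hM, (Fin.castSucc_lt_last _).ne]
    · intro i j hij
      have hij : j < i := hij
      simp [hM, (hij.trans_le (Fin.le_last i)).ne, hij.ne']
  have hmul : ∀ v, Matrix.toLin' M v
      = Fin.snoc (fun j : Fin m => v j.castSucc + v (Fin.last m) * x j.castSucc)
            (v (Fin.last m) * x (Fin.last m)) := by
    intro v
    ext i
    refine Fin.lastCases ?_ (fun i => ?_) i <;>
    simp [hM, Matrix.mulVec, dotProduct, Fin.sum_univ_castSucc, (Fin.castSucc_lt_last _).ne,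
      (Fin.castSucc_lt_last _).ne', mul_comm]
  have himg : Matrix.toLin' M '' cornerSimplex (m + 1) 1
      = convexHull ℝ (insert x (insert 0
          (Set.range fun j : Fin m => Pi.single j.castSucc (1 : ℝ)))) := by
    rw [← convexHull_corner, LinearMap.image_convexHull, Set.image_insert_eq, map_zero,
      ← Set.range_comp, Set.insert_comm x]
    congr 2
    ext w
    simp only [Set.mem_range, Set.mem_insert_iff, Function.comp, Fin.exists_fin_succ',
      Matrix.toLin'_apply, Matrix.mulVec_single_one]
    have h1 : M.col (Fin.last m) = x := by ext i; simp [hM]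
    have h2 : ∀ j : Fin m, M.col j.castSucc = Pi.single j.castSucc 1 := by
      intro j; ext i; simp [hM, (Fin.castSucc_lt_last _).ne, Pi.single_apply]
    simp only [h1, h2, or_comm, eq_comm]
  have hinj : Function.Injective (Matrix.toLin' M) := by
    apply Matrix.mulVec_injective_of_isUnit
    rw [Matrix.isUnit_iff_isUnit_det, hdet]
    exact hx.ne'.isUnit
  rw [← himg]
  have := integral_image_eq_integral_abs_det_fderiv_smul volume
    (isCompact_cornerSimplex (m + 1) 1).measurableSet
    (f := Matrix.toLin' M) (f' := fun _ => (Matrix.toLin' M).toContinuousLinearMap)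
    (fun v _ => (Matrix.toLin' M).toContinuousLinearMap.hasFDerivWithinAt) hinj.injOn g
  rw [this]
  simp only [hmul, smul_eq_mul, integral_const_mul, ContinuousLinearMap.det,
    LinearMap.coe_toContinuousLinearMap, LinearMap.det_toLin', hdet, abs_of_pos hx]

/-- Evaluation of the Dirichlet-type integral over the simplex `Δ_n^{(n)}(x)` with
vertices `x, 0, e_1, …, e_{n-1}`.  Here the `n ≥ 1` variables of the paper are indexed
by `Fin (m + 1)`, so that `e_1, …, e_{n-1}` are the basis vectors `Pi.single j.castSucc 1`
for `j : Fin m`, and `x_n = x (Fin.last m)`. -/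
theorem dirichlet_integral_corner_simplex (m : ℕ) (a : Fin (m + 1) → ℕ) (b : ℕ)
    (x : Fin (m + 1) → ℝ) (hx : ∀ i, 0 < x i) (hs : ∑ i, x i < 1) :
    (∫ t in convexHull ℝ
        (insert x (insert 0
          (Set.range fun j : Fin m => Pi.single j.castSucc (1 : ℝ)))),
      (∏ j, t j ^ a j) * (1 - ∑ j, t j) ^ b)
      = ((∏ j, ((a j).factorial : ℝ)) * (b.factorial : ℝ)
            / (((∑ j, a j) + b + (m + 1)).factorial : ℝ))
        * x (Fin.last m) ^ (a (Fin.last m) + 1)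
        * ∑ k ∈ Fintype.piFinset (fun j : Fin m => Finset.range (a j.castSucc + 1)),
            ∑ l ∈ Finset.range (b + 1),
              ((ascPochhammer ℝ ((∑ j, k j) + l)).eval ((a (Fin.last m) : ℝ) + 1)
                  / ((∏ j, ((k j).factorial : ℝ)) * (l.factorial : ℝ)))
                * (∏ j : Fin m, x j.castSucc ^ k j)
                * (1 - ∑ j, x j) ^ l := by
  rw [integral_corner_eq m x (hx _)]
  have hexp : ∀ v : Fin (m + 1) → ℝ,
      (∏ j, (Fin.snoc (fun j : Fin m => v j.castSucc + v (Fin.last m) * x j.castSucc)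
            (v (Fin.last m) * x (Fin.last m)) : Fin (m + 1) → ℝ) j ^ a j)
        * (1 - ∑ j, (Fin.snoc (fun j : Fin m => v j.castSucc + v (Fin.last m) * x j.castSucc)
            (v (Fin.last m) * x (Fin.last m)) : Fin (m + 1) → ℝ) j) ^ b
      = ∑ k ∈ Fintype.piFinset (fun j : Fin m => Finset.range (a j.castSucc + 1)),
          ∑ l ∈ Finset.range (b + 1),
            ((∏ j : Fin m, ((a j.castSucc).choose (k j) : ℝ) * x j.castSucc ^ k j)
                * ((b.choose l : ℝ) * (1 - ∑ j, x j) ^ l) * x (Fin.last m) ^ a (Fin.last m))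
              * ((∏ j, v j ^ (Fin.snoc (fun j : Fin m => a j.castSucc - k j)
                    (a (Fin.last m) + (∑ j, k j) + l) : Fin (m + 1) → ℕ) j)
                * (1 - ∑ j, v j) ^ (b - l)) := by
    intro v
    have h1 : 1 - ∑ j, (Fin.snoc (fun j : Fin m => v j.castSucc + v (Fin.last m) * x j.castSucc)
            (v (Fin.last m) * x (Fin.last m)) : Fin (m + 1) → ℝ) j
        = v (Fin.last m) * (1 - ∑ j, x j) + (1 - ∑ j, v j) := by
      simp only [Fin.sum_univ_castSucc, Fin.snoc_castSucc, Fin.snoc_last,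
        Finset.sum_add_distrib, ← Finset.mul_sum]
      ring
    rw [h1, add_pow, Fin.prod_univ_castSucc]
    simp only [Fin.snoc_castSucc, Fin.snoc_last, add_comm (v (Fin.castSucc _)), add_pow,
      Finset.prod_univ_sum, Finset.sum_mul]
    refine Finset.sum_congr rfl fun k _ => ?_
    rw [Finset.mul_sum]
    refine Finset.sum_congr rfl fun l _ => ?_
    rw [Fin.prod_univ_castSucc]
    simp only [Fin.snoc_castSucc, Fin.snoc_last, mul_pow, Finset.prod_mul_distrib,
      pow_add, Finset.prod_pow_eq_pow_sum]
    ring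
  simp only [hexp]
  have hI : ∀ (C : ℝ) (α : Fin (m + 1) → ℕ) (β : ℕ), IntegrableOn
      (fun v : Fin (m + 1) → ℝ => C * ((∏ j, v j ^ α j) * (1 - ∑ j, v j) ^ β))
      (cornerSimplex (m + 1) 1) := fun C α β =>
    ContinuousOn.integrableOn_compact (isCompact_cornerSimplex _ _) (by fun_prop)
  rw [integral_finsetSum _ fun k _ => integrable_finsetSum _ fun l _ => hI _ _ _,
    Finset.mul_sum, Finset.mul_sum]
  refine Finset.sum_congr rfl fun k hk => ?_
  rw [integral_finsetSum _ fun l _ => hI _ _ _, Finset.mul_sum, Finset.mul_sum]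
  refine Finset.sum_congr rfl fun l hl => ?_
  have hk' : ∀ j, k j ≤ a j.castSucc := fun j => by
    have := Fintype.mem_piFinset.1 hk j
    simp at this; omega
  have hl' : l ≤ b := by simp at hl; omega
  rw [integral_const_mul, dirichlet_integral _ _ _ _ zero_le_one, one_pow, mul_one]
  have hdeg : (∑ j, (Fin.snoc (fun j : Fin m => a j.castSucc - k j)
      (a (Fin.last m) + (∑ j, k j) + l) : Fin (m + 1) → ℕ) j) + (b - l) + (m + 1)
      = (∑ j, a j) + b + (m + 1) := by
    have : ∑ j : Fin m, (a j.castSucc - k j) + ∑ j, k j = ∑ j : Fin m, a j.castSucc := by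
      rw [← Finset.sum_add_distrib]
      exact Finset.sum_congr rfl fun j _ => Nat.sub_add_cancel (hk' j)
    simp only [Fin.sum_univ_castSucc, Fin.snoc_castSucc, Fin.snoc_last]
    omega
  have hpoch := factorial_mul_ascPochhammer ℝ (a (Fin.last m)) ((∑ j, k j) + l)
  have hchoose : ∀ j, ((a j.castSucc).choose (k j) : ℝ) * (a j.castSucc - k j).factorial
      = (a j.castSucc).factorial / (k j).factorial := fun j => by
    rw [Nat.cast_choose ℝ (hk' j)]
    have := Nat.factorial_ne_zero (a j.castSucc - k j)
    field_simp
  have hcb : (b.choose l : ℝ) * (b - l).factorial = b.factorial / l.factorial := by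
    rw [Nat.cast_choose ℝ hl']
    have := Nat.factorial_ne_zero (b - l)
    field_simp
  have hprod : (∏ j : Fin m, ((a j.castSucc).choose (k j) : ℝ))
      * ∏ j : Fin m, ((a j.castSucc - k j).factorial : ℝ)
      = (∏ j : Fin m, ((a j.castSucc).factorial : ℝ)) / ∏ j, ((k j).factorial : ℝ) := by
    rw [← Finset.prod_mul_distrib, ← Finset.prod_div_distrib]
    exact Finset.prod_congr rfl fun j _ => hchoose j
  rw [hdeg, Fin.prod_univ_castSucc, Fin.prod_univ_castSucc]
  simp only [Fin.snoc_castSucc, Fin.snoc_last, Finset.prod_mul_distrib]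
  rw [add_assoc (a (Fin.last m)), ← hpoch]
  -- group the factors so that `hprod` and `hcb` apply
  have e : ∀ (xs C X cb B P F f p T : ℝ) (q : ℕ), xs * (C * X * (cb * B) * xs ^ q *
    (P * (f * p) * F / T)) = (C * P) * (cb * F) * (f * p) * X * B * xs ^ (q + 1) / T := by
    intros; ring
  rw [e, hprod, hcb]
  ring
end

section
/- Let n ≥ 1 be an integer, let a_1, …, a_{n+1} be complex numbers with Re a_j > -1 for all j, and let x = (x_1,…,x_n) ∈ ℝ^n satisfy x_i > 0 for all i and x_1+⋯+x_n < 1. Let Δ_n ⊂ ℝ^n be the convex hull of {0, e_1, …, e_n}, and for i ∈ {1,…,n+1} let Δ_n^{(i)}(x) ⊂ ℝ^n be the convex hull of {x} together with the n points obtained from {0, e_1, …, e_n} by deleting e_i if 1 ≤ i ≤ n, and by deleting 0 if i = n+1. Then ∫_{Δ_n} t_1^{a_1} ⋯ t_n^{a_n} (1 - t_1 - ⋯ - t_n)^{a_{n+1}} dt = Σ_{i=1}^{n+1} ∫_{Δ_n^{(i)}(x)} t_1^{a_1} ⋯ t_n^{a_n} (1 - t_1 - ⋯ - t_n)^{a_{n+1}}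 dt, where for a positive real t and complex exponent w, t^w := exp(w · log t), and the integrals are Lebesgue integrals of complex-valued functions on ℝ^n. -/
/-!
In barycentric coordinates `bary t` with respect to the vertices `e_1, …, e_n, 0`, the simplex is
`{t | ∀ i, 0 ≤ bary t i}` (`hull_eq`), and the `i`-th piece consists of those `t` in it for which
the ratio `bary t k / bary x k` is smallest at `k = i` (`piece_eq`). Since some index always
attains the minimum, the pieces cover the simplex (`hull_eq_iUnion`). Two pieces meet only where
two of the ratios agree, which is a proper affine hyperplane, hence a null set
(`aedisjoint_pieces`).

Additivity of the Bochner integral over this almost disjoint union requires the integrand to be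
integrable on the simplex (`integrableOn_integrand`). At every point of the simplex some
barycentric coordinate is at least `1 / (n + 1)`. On the compact set where this holds for the
`i`-th coordinate, the `i`-th factor is continuous, and the product of the other `n` factors is
integrable: for `i` the last index it is a product of one-variable functions on a subset of
`[0,1]^n`, and the other indices reduce to this one by the measure-preserving affine involution
that exchanges `e_i` and `0` (`integrableOn_omit`).
-/

open MeasureTheory

namespace DirichletSplit

/-! ### Barycentric coordinates -/

/-- The vertices `e_1, …, e_n, 0` of the standard simplex. -/
def vert (n : ℕ) : Fin (n + 1) → (Fin n → ℝ) :=
  Fin.snoc (fun j : Fin n => Pi.single j (1 : ℝ)) 0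

/-- Barycentric coordinates with respect to `vert n`: `(t_1, …, t_n, 1 - t_1 - ⋯ - t_n)`. -/
def bary {n : ℕ} (t : Fin n → ℝ) (i : Fin (n + 1)) : ℝ :=
  Fin.lastCases (motive := fun _ => ℝ) (1 - ∑ j, t j) t i

@[simp] lemma bary_last {n : ℕ} (t : Fin n → ℝ) : bary t (Fin.last n) = 1 - ∑ j, t j := by
  simp [bary]

@[simp] lemma bary_castSucc {n : ℕ} (t : Fin n → ℝ) (j : Fin n) : bary t j.castSucc = t j := by
  simp [bary]

@[simp] lemma vert_last (n : ℕ) : vert n (Fin.last n) = 0 := by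
  simp [vert]

@[simp] lemma vert_castSucc {n : ℕ} (j : Fin n) : vert n j.castSucc = Pi.single j 1 := by
  simp [vert]

lemma sum_bary {n : ℕ} (t : Fin n → ℝ) : ∑ i, bary t i = 1 := by
  simp [Fin.sum_univ_castSucc]

lemma sum_bary_smul_vert {n : ℕ} (t : Fin n → ℝ) : ∑ i, bary t i • vert n i = t := by
  ext k
  simp [Fin.sum_univ_castSucc, Finset.sum_apply, Pi.single_apply]

lemma bary_vert {n : ℕ} (i k : Fin (n + 1)) : bary (vert n i) k = if k = i then 1 else 0 := by
  induction i using Fin.lastCases <;> induction k using Fin.lastCases <;>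
    simp [Pi.single_apply, Fin.castSucc_ne_last, (Fin.castSucc_ne_last _).symm]

lemma bary_add_smul {n : ℕ} (u v : Fin n → ℝ) {p q : ℝ} (h : p + q = 1) (i : Fin (n + 1)) :
    bary (p • u + q • v) i = p * bary u i + q * bary v i := by
  induction i using Fin.lastCases with
  | last =>
    simp only [bary_last, Pi.add_apply, Pi.smul_apply, smul_eq_mul, Finset.sum_add_distrib,
      ← Finset.mul_sum]
    linear_combination -h
  | cast j => simp

lemma continuous_bary {n : ℕ} (i : Fin (n + 1)) :
    Continuous (fun t : Fin n → ℝ => bary t i) := by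
  induction i using Fin.lastCases with
  | last => simp only [bary_last]; fun_prop
  | cast j => simp only [bary_castSucc]; fun_prop

/-! ### The simplex and its pieces -/

lemma hull_eq (n : ℕ) : convexHull ℝ (Set.range (vert n)) = {t | ∀ i, 0 ≤ bary t i} := by
  apply Set.Subset.antisymm
  · refine convexHull_min ?_ ?_
    · rintro _ ⟨i, rfl⟩ k
      rw [bary_vert]
      split_ifs <;> norm_num
    · intro u hu v hv p q hp hq hpq i
      rw [bary_add_smul u v hpq]
      have := hu i
      have := hv i
      positivity
  · intro t ht
    rw [← sum_bary_smul_vert t]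
    exact (convex_convexHull ℝ _).sum_mem (fun i _ => ht i) (sum_bary t)
      (fun i _ => subset_convexHull ℝ _ ⟨i, rfl⟩)

/-- The `i`-th piece is where the ratio `bary t k / bary x k` is smallest at `k = i` and
nonnegative there; the inequality between ratios is stated with denominators cleared. -/
lemma piece_eq {n : ℕ} (x : Fin n → ℝ) (hx : ∀ i, 0 < bary x i) (i : Fin (n + 1)) :
    convexHull ℝ (insert x (vert n '' {j | j ≠ i})) =
      {t | 0 ≤ bary t i ∧ ∀ k, bary t i * bary x k ≤ bary t k * bary x i} := by
  apply Set.Subset.antisymm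
  · refine convexHull_min ?_ ?_
    · rintro _ (rfl | ⟨j, hj, rfl⟩)
      · exact ⟨(hx i).le, fun k => (mul_comm _ _).le⟩
      · have hj' : i ≠ j := fun h => hj h.symm
        simp only [Set.mem_ofPred_eq, bary_vert, if_neg hj', le_refl, zero_mul, true_and]
        intro k
        have := hx i
        split_ifs <;> simp [this.le]
    · rintro u ⟨hu0, hu⟩ v ⟨hv0, hv⟩ p q hp hq hpq
      simp only [Set.mem_ofPred_eq, bary_add_smul u v hpq]
      refine ⟨by positivity, fun k => ?_⟩
      have h1 := mul_le_mul_of_nonneg_left (hu k) hp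
      have h2 := mul_le_mul_of_nonneg_left (hv k) hq
      linarith
  · rintro t ⟨ht0, ht⟩
    -- `t = l • x + ∑_{j ≠ i} (bary t j - l * bary x j) • vert n j` with `l` as below
    set l := bary t i / bary x i with hl
    have hl0 : 0 ≤ l := div_nonneg ht0 (hx i).le
    have hli : l * bary x i = bary t i := div_mul_cancel₀ _ (hx i).ne'
    have hlk : ∀ k, l * bary x k ≤ bary t k := fun k => by
      rw [hl, div_mul_eq_mul_div, div_le_iff₀ (hx i)]
      exact ht k
    let w : Fin (n + 1) → ℝ := fun j => (bary t j - l * bary x j) + if j = i then l else 0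
    let z : Fin (n + 1) → (Fin n → ℝ) := fun j => if j = i then x else vert n j
    have hw : ∑ j, w j = 1 := by
      simp [w, Finset.sum_add_distrib, ← Finset.mul_sum, sum_bary]
    have hwz : ∀ j, w j • z j = (bary t j • vert n j - l • (bary x j • vert n j)) +
        if j = i then l • x else 0 := by
      intro j
      by_cases h : j = i
      · subst h
        simp [w, z, hli, smul_smul]
      · simp [w, z, h, sub_smul, smul_smul]
    have hsum : ∑ j, w j • z j = t := by
      simp only [hwz, Finset.sum_add_distrib, Finset.sum_sub_distrib, ← Finset.smul_sum,
        sum_bary_smul_vert]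
      simp
    rw [← hsum]
    refine (convex_convexHull ℝ _).sum_mem (fun j _ => ?_) hw (fun j _ => ?_)
    · have := hlk j
      have : 0 ≤ (if j = i then l else 0) := by split_ifs <;> simp [hl0]
      simp only [w]; linarith
    · apply subset_convexHull
      by_cases h : j = i
      · simp [z, h]
      · simp only [z, if_neg h]
        exact Set.mem_insert_of_mem _ ⟨j, h, rfl⟩

lemma hull_eq_iUnion {n : ℕ} (x : Fin n → ℝ) (hx : ∀ i, 0 < bary x i) :
    convexHull ℝ (Set.range (vert n)) =
      ⋃ i, convexHull ℝ (insert x (vert n '' {j | j ≠ i})) := by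
  ext t
  simp only [hull_eq, piece_eq x hx, Set.mem_iUnion, Set.mem_ofPred_eq]
  constructor
  · intro ht
    obtain ⟨i, hi⟩ := Finite.exists_min (fun i => bary t i / bary x i)
    refine ⟨i, ht i, fun k => ?_⟩
    have := hi k
    rwa [div_le_div_iff₀ (hx i) (hx k)] at this
  · rintro ⟨i, h0, h⟩ k
    have h1 := h k
    have h2 : 0 ≤ bary t k * bary x i := le_trans (mul_nonneg h0 (hx k).le) h1
    exact nonneg_of_mul_nonneg_left h2 (hx i)

/-- Two pieces meet inside a proper affine hyperplane. -/
lemma aedisjoint_pieces {n : ℕ} (x : Fin n → ℝ) (hx : ∀ i, 0 < bary x i) {i k : Fin (n + 1)}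
    (hik : i ≠ k) :
    AEDisjoint volume (convexHull ℝ (insert x (vert n '' {j | j ≠ i})))
      (convexHull ℝ (insert x (vert n '' {j | j ≠ k}))) := by
  let S : AffineSubspace ℝ (Fin n → ℝ) :=
    { carrier := {t | bary t i * bary x k = bary t k * bary x i}
      smul_vsub_vadd_mem' := by
        intro c p₁ p₂ p₃ h₁ h₂ h₃
        simp only [Set.mem_ofPred_eq] at h₁ h₂ h₃ ⊢
        have key : ∀ m, bary (c • (p₁ -ᵥ p₂) +ᵥ p₃) m =
            c * (bary p₁ m - bary p₂ m) + bary p₃ m := by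
          intro m
          induction m using Fin.lastCases with
          | last =>
            simp only [vsub_eq_sub, vadd_eq_add, bary_last, Pi.add_apply, Pi.smul_apply,
              Pi.sub_apply, smul_eq_mul, Finset.sum_add_distrib, ← Finset.mul_sum,
              Finset.sum_sub_distrib]
            ring
          | cast j => simp
        rw [key, key]
        linear_combination c * h₁ - c * h₂ + h₃ }
  have hS : S ≠ ⊤ := by
    intro h
    have : vert n i ∈ S := h ▸ AffineSubspace.mem_top ℝ _ _
    have h' : bary (vert n i) i * bary x k = bary (vert n i) k * bary x i := this
    simp only [bary_vert, if_neg hik.symm, if_true] at h'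
    have := hx k
    linarith
  refine measure_mono_null ?_ (Measure.addHaar_affineSubspace volume S hS)
  rw [piece_eq x hx, piece_eq x hx]
  rintro t ⟨⟨_, h1⟩, ⟨_, h2⟩⟩
  exact le_antisymm (h1 k) (h2 i)

/-! ### Integrability of the integrand -/

lemma isCompact_hull (n : ℕ) : IsCompact (convexHull ℝ (Set.range (vert n))) :=
  (Set.finite_range _).isCompact_convexHull ℝ

lemma integrableOn_box {n : ℕ} (b : Fin n → ℂ) (hb : ∀ j, -1 < (b j).re) :
    IntegrableOn (fun t : Fin n → ℝ => ∏ j, (t j : ℂ) ^ b j)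
      (Set.univ.pi fun _ => Set.Icc (0 : ℝ) 1) := by
  rw [IntegrableOn, volume_pi, Measure.restrict_pi_pi]
  refine Integrable.fintype_prod (f := fun j (s : ℝ) => (s : ℂ) ^ b j) fun j => ?_
  have h := intervalIntegral.intervalIntegrable_cpow' (a := 0) (b := 1) (hb j)
  rw [intervalIntegrable_iff_integrableOn_Icc_of_le zero_le_one] at h
  exact h

/-- The linear part of the affine involution `swap j`. -/
def swapLin {n : ℕ} (j : Fin n) : (Fin n → ℝ) →ₗ[ℝ] (Fin n → ℝ) where
  toFun t := fun k => if k = j then -∑ m, t m else t k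
  map_add' u v := by
    ext k
    by_cases h : k = j <;> simp [h, Finset.sum_add_distrib]; ring
  map_smul' c u := by
    ext k
    by_cases h : k = j <;> simp [h, Finset.mul_sum]

lemma swapLin_comp {n : ℕ} (j : Fin n) : swapLin j ∘ₗ swapLin j = LinearMap.id := by
  apply LinearMap.ext
  intro t
  ext k
  by_cases h : k = j
  · subst h
    have h1 : ∑ m, (if m = k then -∑ l, t l else t m) = -∑ l, t l + (∑ l, t l - t k) := by
      rw [← Finset.add_sum_erase _ _ (Finset.mem_univ k), if_pos rfl,
        ← Finset.add_sum_erase _ t (Finset.mem_univ k), add_sub_cancel_left]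
      congr 1
      exact Finset.sum_congr rfl fun m hm => if_neg (Finset.ne_of_mem_erase hm)
    simp [swapLin, h1]
  · simp [swapLin, h]

/-- The affine involution of `ℝ^n` exchanging the vertices `e_j` and `0`: it replaces the
coordinate `t_j` by `1 - t_1 - ⋯ - t_n`. -/
def swap {n : ℕ} (j : Fin n) (t : Fin n → ℝ) : Fin n → ℝ :=
  fun k => if k = j then 1 - ∑ m, t m else t k

lemma swap_eq {n : ℕ} (j : Fin n) (t : Fin n → ℝ) : swap j t = Pi.single j 1 + swapLin j t := by
  ext k
  by_cases h : k = j <;> simp [swap, swapLin, h, sub_eq_add_neg]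

lemma measurePreserving_swap {n : ℕ} (j : Fin n) : MeasurePreserving (swap (n := n) j) := by
  have hdet : LinearMap.det (swapLin j) * LinearMap.det (swapLin j) = 1 := by
    rw [← LinearMap.det_comp, swapLin_comp, LinearMap.det_id]
  have habs : |LinearMap.det (swapLin j)| = 1 := by
    rcases mul_self_eq_one_iff.1 hdet with h | h <;> simp [h]
  have hlin : MeasurePreserving (swapLin j : (Fin n → ℝ) → (Fin n → ℝ)) := by
    refine ⟨(LinearMap.continuous_of_finiteDimensional _).measurable, ?_⟩
    rw [Measure.map_linearMap_addHaar_eq_smul_addHaar volume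
      (left_ne_zero_of_mul_eq_one hdet), abs_inv, habs]
    simp
  have : swap (n := n) j = (fun t => Pi.single j 1 + t) ∘ (swapLin j) := by
    ext1 t
    exact swap_eq j t
  rw [this]
  exact (measurePreserving_add_left volume _).comp hlin

/-- The Dirichlet integrand with its `n + 1` factors treated uniformly. -/
noncomputable def integrand {n : ℕ} (a : Fin (n + 1) → ℂ) (t : Fin n → ℝ) : ℂ :=
  ∏ i, (bary t i : ℂ) ^ a i

/-- Omitting one of the `n + 1` factors leaves a function integrable on the simplex. -/
lemma integrableOn_omit {n : ℕ} (a : Fin (n + 1) → ℂ) (ha : ∀ j, -1 < (a j).re)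
    (i : Fin (n + 1)) :
    IntegrableOn (fun t : Fin n → ℝ => ∏ k ∈ Finset.univ.erase i, (bary t k : ℂ) ^ a k)
      (convexHull ℝ (Set.range (vert n))) := by
  have hle : ∀ t ∈ convexHull ℝ (Set.range (vert n)), ∀ k, bary t k ∈ Set.Icc (0 : ℝ) 1 := by
    intro t ht k
    rw [hull_eq] at ht
    refine ⟨ht k, ?_⟩
    rw [← sum_bary t]
    exact Finset.single_le_sum (fun m _ => ht m) (Finset.mem_univ k)
  induction i using Fin.lastCases with
  | last =>
    have := integrableOn_box (fun j : Fin n => a j.castSucc) fun j => ha _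
    refine (this.mono_set fun t ht k _ => ?_).congr_fun_ae (Filter.Eventually.of_forall fun t => ?_)
    · simpa using hle t ht k.castSucc
    · have : (Finset.univ.erase (Fin.last n)) = Finset.univ.map Fin.castSuccEmb := by
        ext m
        induction m using Fin.lastCases <;> simp
      simp [this]
  | cast j =>
    -- transport the product over the box along the involution exchanging `e_j` and `0`
    have hb := integrableOn_box
      (fun k : Fin n => if k = j then a (Fin.last n) else a k.castSucc)
      (fun k => by split_ifs <;> exact ha _)
    have hms : MeasurableSet (Set.univ.pi fun _ : Fin n => Set.Icc (0 : ℝ) 1) :=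
      MeasurableSet.univ_pi fun _ => measurableSet_Icc
    have h2 := ((measurePreserving_swap j).restrict_preimage hms).integrable_comp_of_integrable hb
    have h3 : IntegrableOn _ (swap j ⁻¹' (Set.univ.pi fun _ : Fin n => Set.Icc (0 : ℝ) 1)) := h2
    refine (h3.mono_set fun t ht k _ => ?_).congr_fun_ae (Filter.Eventually.of_forall fun t => ?_)
    · by_cases h : k = j
      · simpa [swap, h] using hle t ht (Fin.last n)
      · simpa [swap, h] using hle t ht k.castSucc
    · have : (Finset.univ.erase j.castSucc) =
          insert (Fin.last n) ((Finset.univ.erase j).map Fin.castSuccEmb) := by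
        ext m
        induction m using Fin.lastCases <;> simp [(Fin.castSucc_ne_last _).symm]
      beta_reduce
      rw [this, Finset.prod_insert (by simp)]
      simp only [Function.comp_apply, Finset.prod_map, Fin.coe_castSuccEmb, bary_last,
        bary_castSucc]
      rw [← Finset.mul_prod_erase _ _ (Finset.mem_univ j)]
      congr 1
      · simp [swap]
      · refine Finset.prod_congr rfl fun m hm => ?_
        simp [swap, Finset.ne_of_mem_erase hm]

/-- On the part of the simplex where `bary t i ≥ 1 / (n + 1)` the `i`-th factor is bounded, so
`integrableOn_omit` gives integrability there; these parts cover the simplex. -/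
lemma integrableOn_integrand {n : ℕ} (a : Fin (n + 1) → ℂ) (ha : ∀ j, -1 < (a j).re) :
    IntegrableOn (integrand a) (convexHull ℝ (Set.range (vert n))) := by
  have hcover : convexHull ℝ (Set.range (vert n)) ⊆
      ⋃ i, (convexHull ℝ (Set.range (vert n)) ∩ {t | 1 / ((n : ℝ) + 1) ≤ bary t i}) := by
    intro t ht
    rw [Set.mem_iUnion]
    by_contra! hcon
    have hlt : ∀ i, bary t i < 1 / ((n : ℝ) + 1) := fun i => by
      by_contra! h
      exact hcon i ⟨ht, h⟩
    have := Finset.sum_lt_sum_of_nonempty (Finset.univ_nonempty (α := Fin (n + 1)))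
      fun i _ => hlt i
    rw [sum_bary] at this
    have hn : (n : ℝ) + 1 ≠ 0 := by positivity
    simp [hn] at this
  refine IntegrableOn.mono_set ?_ hcover
  rw [integrableOn_finite_iUnion]
  intro i
  have hclosed : IsClosed {t : Fin n → ℝ | 1 / ((n : ℝ) + 1) ≤ bary t i} :=
    isClosed_le continuous_const (continuous_bary i)
  have hcomp := (isCompact_hull n).inter_right hclosed
  have hcont : ContinuousOn (fun t : Fin n → ℝ => (bary t i : ℂ) ^ a i)
      (convexHull ℝ (Set.range (vert n)) ∩ {t | 1 / ((n : ℝ) + 1) ≤ bary t i}) := by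
    refine ContinuousOn.cpow_const
      (Complex.continuous_ofReal.comp (continuous_bary i)).continuousOn ?_
    rintro t ⟨_, ht⟩
    have : 0 < bary t i := lt_of_lt_of_le (by positivity) ht
    exact Complex.ofReal_mem_slitPlane.2 this
  have := ((integrableOn_omit a ha i).mono_set Set.inter_subset_left).continuousOn_mul hcont hcomp
  refine this.congr_fun_ae (Filter.Eventually.of_forall fun t => ?_)
  exact Finset.mul_prod_erase _ (fun k => (bary t k : ℂ) ^ a k) (Finset.mem_univ i)

end DirichletSplit

/-- Splitting Dirichlet's multivariable beta integral with complex exponents: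
the integral over the standard simplex `Δ_n` is the sum of the integrals over the
pieces `Δ_n^{(i)}(x)`, `i = 1, …, n+1`.  The `n + 1` exponents are indexed (0-based)
by `Fin (n + 1)`; the vertices `e_1, …, e_n, 0` of `Δ_n` are `vert 0, …, vert n` with
`vert := Fin.snoc (fun j => Pi.single j 1) 0`, and `Δ_n^{(i)}(x)` is the convex hull
of `x` and the vertices `vert j`, `j ≠ i`. -/
theorem dirichlet_integral_split (n : ℕ) (hn : 1 ≤ n) (a : Fin (n + 1) → ℂ)
    (ha : ∀ j, -1 < (a j).re)
    (x : Fin n → ℝ) (hx : ∀ j, 0 < x j) (hs : ∑ j, x j < 1) :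
    (∫ t in convexHull ℝ
        (Set.range (Fin.snoc (fun j : Fin n => Pi.single j (1 : ℝ)) 0 :
          Fin (n + 1) → (Fin n → ℝ))),
      (∏ j : Fin n, (t j : ℂ) ^ a j.castSucc)
        * ((1 - ∑ j, t j : ℝ) : ℂ) ^ a (Fin.last n))
      = ∑ i : Fin (n + 1),
          ∫ t in convexHull ℝ
              (insert x
                ((Fin.snoc (fun j : Fin n => Pi.single j (1 : ℝ)) 0 :
                    Fin (n + 1) → (Fin n → ℝ)) '' {j | j ≠ i})),
            (∏ j : Fin n, (t j : ℂ) ^ a j.castSucc)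
              * ((1 - ∑ j, t j : ℝ) : ℂ) ^ a (Fin.last n) := by
  have hx' : ∀ i, 0 < DirichletSplit.bary x i := by
    intro i
    induction i using Fin.lastCases with
    | last => simpa using hs
    | cast j => simpa using hx j
  have hf : (fun t : Fin n → ℝ => (∏ j : Fin n, (t j : ℂ) ^ a j.castSucc)
        * ((1 - ∑ j, t j : ℝ) : ℂ) ^ a (Fin.last n)) = DirichletSplit.integrand a := by
    ext t
    simp only [DirichletSplit.integrand, Fin.prod_univ_castSucc, DirichletSplit.bary_last,
      DirichletSplit.bary_castSucc]
  change (∫ t in convexHull ℝ (Set.range (DirichletSplit.vert n)), _) =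
    ∑ i : Fin (n + 1), ∫ t in convexHull ℝ (insert x (DirichletSplit.vert n '' {j | j ≠ i})), _
  have hint := DirichletSplit.integrableOn_integrand a ha
  rw [hf]
  rw [DirichletSplit.hull_eq_iUnion x hx'] at hint ⊢
  rw [integral_iUnion_ae _ (fun i k hik => DirichletSplit.aedisjoint_pieces x hx' hik) hint,
    tsum_fintype]
  intro i
  exact ((Set.toFinite _).isCompact_convexHull ℝ).measurableSet.nullMeasurableSet
end
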